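/- arXiv:1707.02366 — 14 statements merged into one kernel-verified Lean document; each statement's English description precedes it below -/
import Mathlib

section
/- For every positive integer n, the entries a_n and b_n of the n-th node of the ternary tree A₃ are positive coprime integers, and they satisfy 2a_n ≥ b_n − 4a_n c_n. -/
/-!
The inequality `b - 4ac ≤ 2a`, positivity and coprimality together form an invariant of the tree,
so the result follows by strong induction, each node `n ≥ 2` being a child of some `m < n`.

The inequality at a node is exactly what makes the left child's entry `4(c+1)a - b` at least `2a`,
hence positive; the other positivity claims and the inequality at the children are then linear.
For coprimality, the entries of the outer children are integer combinations of a coprime pair,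
namely `(2a, b)` if `b` is odd and `(a, b/2)` if `b` is even. In each case these combinations form
a matrix of determinant `±1`, so coprimality is preserved.
-/

theorem ternary_tree_pos_coprime
    (a b c : ℕ → ℤ)
    (h1 : a 1 = 1 ∧ b 1 = 2 ∧ c 1 = 0)
    (hodd : ∀ n : ℕ, 1 ≤ n → Odd (b n) →
      a (3 * n - 1) = 4 * (c n + 1) * a n - b n ∧
      b (3 * n - 1) = 2 * a n ∧ c (3 * n - 1) = 0 ∧
      a (3 * n) = a n ∧ b (3 * n) = 2 * a n + b n ∧ c (3 * n) = c n + 1 ∧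
      a (3 * n + 1) = 2 * a n + b n ∧ b (3 * n + 1) = 2 * a n + 2 * b n ∧
      c (3 * n + 1) = 0)
    (heven : ∀ n : ℕ, 1 ≤ n → Even (b n) →
      a (3 * n - 1) = 2 * (c n + 1) * a n - b n / 2 ∧
      b (3 * n - 1) = a n ∧ c (3 * n - 1) = 0 ∧
      a (3 * n) = a n ∧ b (3 * n) = 2 * a n + b n ∧ c (3 * n) = c n + 1 ∧
      a (3 * n + 1) = a n + b n / 2 ∧ b (3 * n + 1) = a n + b n ∧
      c (3 * n + 1) = 0)
    : ∀ n : ℕ, 1 ≤ n → 0 < a n ∧ 0 < b n ∧ IsCoprime (a n) (b n) ∧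
      b n - 4 * a n * c n ≤ 2 * a n := by
  intro n
  induction n using Nat.strong_induction_on with
  | _ n ih =>
  intro hn
  obtain rfl | ⟨m, hm, hmn, hnm⟩ : n = 1 ∨
      ∃ m, 1 ≤ m ∧ m < n ∧ (n = 3 * m - 1 ∨ n = 3 * m ∨ n = 3 * m + 1) := by
    by_cases h : n = 1
    · exact Or.inl h
    · exact Or.inr ⟨(n + 1) / 3, by omega, by omega, by omega⟩
  · obtain ⟨ha, hb, hc⟩ := h1
    rw [ha, hb, hc]
    exact ⟨by norm_num, by norm_num, isCoprime_one_left, by norm_num⟩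
  obtain ⟨ha, hb, hcop, hle⟩ := ih m hmn hm
  have hmid : IsCoprime (a m) (2 * a m + b m) := by
    obtain ⟨u, v, h⟩ := hcop
    exact ⟨u - 2 * v, v, by linear_combination h⟩
  rcases Int.even_or_odd (b m) with hp | hp
  · obtain ⟨l1, l2, l3, m1, m2, m3, r1, r2, r3⟩ := heven m hm hp
    obtain ⟨k, hk⟩ := hp
    have hk2 : b m / 2 = k := by omega
    rw [hk2] at l1 r1
    obtain ⟨u, v, h⟩ : IsCoprime (a m) k :=
      hcop.of_isCoprime_of_dvd_right ⟨2, by linarith⟩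
    rcases hnm with rfl | rfl | rfl
    · rw [l1, l2, l3]
      exact ⟨by linarith, ha, ⟨-v, u + 2 * (c m + 1) * v, by linear_combination h⟩, by linarith⟩
    · rw [m1, m2, m3]
      exact ⟨ha, by linarith, hmid, by linarith⟩
    · rw [r1, r2, r3]
      exact ⟨by linarith, by linarith,
        ⟨2 * u - v, v - u, by rw [hk]; linear_combination h⟩, by linarith⟩
  · obtain ⟨l1, l2, l3, m1, m2, m3, r1, r2, r3⟩ := hodd m hm hp
    obtain ⟨u, v, h⟩ : IsCoprime (2 * a m) (b m) := by
      obtain ⟨k, hk⟩ := hp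
      exact IsCoprime.mul_left ⟨-k, 1, by linear_combination hk⟩ hcop
    rcases hnm with rfl | rfl | rfl
    · rw [l1, l2, l3]
      exact ⟨by linarith, by linarith,
        ⟨-v, u + 2 * (c m + 1) * v, by linear_combination h⟩, by linarith⟩
    · rw [m1, m2, m3]
      exact ⟨ha, by linarith, hmid, by linarith⟩
    · rw [r1, r2, r3]
      exact ⟨by linarith, by linarith, ⟨2 * u - v, v - u, by linear_combination h⟩, by linarith⟩
end

section
/- Let t₀ = 0 and t_n = a_n/b_n (as a rational number) for n ≥ 1, where a_n, b_n come from the ternary tree A₃. Then for every positive integer n, t_n = 1/(2(1 + 2·v₃(n) − t_{n−1})), where v₃(n) is the 3-adic valuation of n. -/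
/-!
In terms of `t = a / b` the parity of `b` disappears from the tree rules, which become
`t (3m-1) = 2 (c m + 1) - 1 / (2 t m)`, `t (3m) = t m / (2 t m + 1)` and
`t (3m+1) = (2 t m + 1) / (2 t m + 2)`, while `c m` is the 3-adic valuation of `m`.
The recurrence is then a strong induction on `n ≥ 1`. For `n = 3m` and `n = 3m + 1` it is a
direct computation from the value of `t m`. For `n = 3m - 1`, the recurrence at `m` turns the first
rule into `t (3m-1) = 1 + t (m-1)`, and `t (3m-2) = (2 t (m-1) + 1) / (2 t (m-1) + 2)`, which also
holds for `m = 1` since `t 0 = 0` and `t 1 = 1/2`. The identity `t (3m-1) = 1 + t (m-1)` also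
supplies the positivity of `a (3m-1)`, which the tree rules alone do not show and without which
the divisions would not be legitimate.
-/

theorem ternary_tree_t_recurrence
    (a b c : ℕ → ℤ)
    (h1 : a 1 = 1 ∧ b 1 = 2 ∧ c 1 = 0)
    (hodd : ∀ n : ℕ, 1 ≤ n → Odd (b n) →
      a (3 * n - 1) = 4 * (c n + 1) * a n - b n ∧
      b (3 * n - 1) = 2 * a n ∧ c (3 * n - 1) = 0 ∧
      a (3 * n) = a n ∧ b (3 * n) = 2 * a n + b n ∧ c (3 * n) = c n + 1 ∧
      a (3 * n + 1) = 2 * a n + b n ∧ b (3 * n + 1) = 2 * a n + 2 * b n ∧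
      c (3 * n + 1) = 0)
    (heven : ∀ n : ℕ, 1 ≤ n → Even (b n) →
      a (3 * n - 1) = 2 * (c n + 1) * a n - b n / 2 ∧
      b (3 * n - 1) = a n ∧ c (3 * n - 1) = 0 ∧
      a (3 * n) = a n ∧ b (3 * n) = 2 * a n + b n ∧ c (3 * n) = c n + 1 ∧
      a (3 * n + 1) = a n + b n / 2 ∧ b (3 * n + 1) = a n + b n ∧
      c (3 * n + 1) = 0)
    (t : ℕ → ℚ) (ht0 : t 0 = 0)
    (ht : ∀ n : ℕ, 1 ≤ n → t n = (a n : ℚ) / (b n : ℚ)) :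
    ∀ n : ℕ, 1 ≤ n →
      t n = 1 / (2 * (1 + 2 * (padicValNat 3 n : ℚ) - t (n - 1))) := by
  have step : ∀ m : ℕ, 1 ≤ m → 0 < a m → 0 < b m →
      0 < b (3 * m - 1) ∧ 0 < a (3 * m) ∧ 0 < b (3 * m) ∧
      0 < a (3 * m + 1) ∧ 0 < b (3 * m + 1) ∧
      c (3 * m - 1) = 0 ∧ c (3 * m) = c m + 1 ∧ c (3 * m + 1) = 0 ∧
      t (3 * m - 1) = 2 * ((c m : ℚ) + 1) - 1 / (2 * t m) ∧
      t (3 * m) = t m / (2 * t m + 1) ∧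
      t (3 * m + 1) = (2 * t m + 1) / (2 * t m + 2) := by
    intro m hm ha hb
    have haq : (0 : ℚ) < a m := by exact_mod_cast ha
    have hbq : (0 : ℚ) < b m := by exact_mod_cast hb
    rw [ht (3 * m - 1) (by omega), ht (3 * m) (by omega), ht (3 * m + 1) (by omega), ht m hm]
    rcases Int.even_or_odd (b m) with hp | hp
    · obtain ⟨e1, e2, e3, e4, e5, e6, e7, e8, e9⟩ := heven m hm hp
      obtain ⟨k, hk⟩ := hp
      have hk2 : b m / 2 = k := by omega
      have hkq : (0 : ℚ) < k := by
        have : 0 < k := by omega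
        exact_mod_cast this
      rw [hk2] at e1 e7
      rw [e1, e2, e3, e4, e5, e6, e7, e8, e9, hk]
      refine ⟨by omega, by omega, by omega, by omega, by omega, rfl, rfl, rfl, ?_, ?_, ?_⟩ <;>
      · push_cast
        field_simp
        try ring
    · obtain ⟨e1, e2, e3, e4, e5, e6, e7, e8, e9⟩ := hodd m hm hp
      rw [e1, e2, e3, e4, e5, e6, e7, e8, e9]
      refine ⟨by omega, by omega, by omega, by omega, by omega, rfl, rfl, rfl, ?_, ?_, ?_⟩ <;>
      · push_cast
        field_simp
        try ring
  have tpos : ∀ m : ℕ, 1 ≤ m → 0 < a m → 0 < b m → 0 < t m := by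
    intro m hm ha hb
    rw [ht m hm]
    have haq : (0 : ℚ) < a m := by exact_mod_cast ha
    have hbq : (0 : ℚ) < b m := by exact_mod_cast hb
    positivity
  have t1 : t 1 = 1 / 2 := by
    rw [ht 1 le_rfl, h1.1, h1.2.1]; norm_num
  have key : ∀ n : ℕ, 1 ≤ n → 0 < a n ∧ 0 < b n ∧ c n = (padicValNat 3 n : ℤ) ∧
      t n * (2 * (1 + 2 * (padicValNat 3 n : ℚ) - t (n - 1))) = 1 := by
    intro n
    induction n using Nat.strong_induction_on with
    | _ n ih =>
      intro hn
      rcases Nat.lt_or_ge n 2 with h2 | h2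
      · obtain rfl : n = 1 := by omega
        obtain ⟨ha, hb, hc⟩ := h1
        refine ⟨by omega, by omega, by simp [hc], ?_⟩
        simp [t1, ht0]
      obtain ⟨m, hm, hnm⟩ : ∃ m, 1 ≤ m ∧ (n = 3 * m - 1 ∨ n = 3 * m ∨ n = 3 * m + 1) :=
        ⟨(n + 1) / 3, by omega, by omega⟩
      obtain ⟨ha, hb, hc, hR⟩ := ih m (by omega) hm
      obtain ⟨p1, p2, p3, p4, p5, c1, c2, c3, q1, q2, q3⟩ := step m hm ha hb
      have hT := tpos m hm ha hb
      have hcq : (c m : ℚ) = (padicValNat 3 m : ℚ) := by rw [hc]; simp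
      rcases hnm with rfl | rfl | rfl
      · have hv : padicValNat 3 (3 * m - 1) = 0 := padicValNat.eq_zero_of_not_dvd (by omega)
        have hs : 0 ≤ t (m - 1) ∧
            t (3 * m - 1 - 1) = (2 * t (m - 1) + 1) / (2 * t (m - 1) + 2) := by
          rcases Nat.lt_or_ge m 2 with h | h
          · obtain rfl : m = 1 := by omega
            simp [ht0, t1]
          · obtain ⟨ha', hb', -, -⟩ := ih (m - 1) (by omega) (by omega)
            obtain ⟨-, -, -, -, -, -, -, -, -, -, r⟩ := step (m - 1) (by omega) ha' hb'
            refine ⟨(tpos (m - 1) (by omega) ha' hb').le, ?_⟩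
            rw [← r]
            congr 1
            omega
        obtain ⟨hs0, hs1⟩ := hs
        have hts : t (3 * m - 1) = t (m - 1) + 1 := by
          have : 1 / (2 * t m) = 1 + 2 * (padicValNat 3 m : ℚ) - t (m - 1) := by
            rw [div_eq_iff (by positivity)]
            linarith
          rw [q1, hcq, this]
          ring
        refine ⟨?_, p1, by simp [c1, hv], ?_⟩
        · have hbq : (0 : ℚ) < b (3 * m - 1) := by exact_mod_cast p1
          have h0 : 0 < t (3 * m - 1) := by rw [hts]; positivity
          rw [ht _ hn, div_pos_iff_of_pos_right hbq] at h0
          exact_mod_cast h0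
        · rw [hts, hs1, hv]
          push_cast
          field_simp
          ring
      · have hv : padicValNat 3 (3 * m) = padicValNat 3 m + 1 := by
          rw [padicValNat.mul (by norm_num) (by omega), padicValNat.self (by norm_num), add_comm]
        refine ⟨p2, p3, by rw [c2, hc, hv]; push_cast; rfl, ?_⟩
        rw [q2, q1, hv, hcq]
        push_cast
        field_simp
        ring
      · have hv : padicValNat 3 (3 * m + 1) = 0 := padicValNat.eq_zero_of_not_dvd (by omega)
        refine ⟨p4, p5, by simp [c3, hv], ?_⟩
        rw [Nat.add_sub_cancel, q3, q2, hv]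
        push_cast
        field_simp
        ring
  intro n hn
  exact eq_one_div_of_mul_eq_one_left (key n hn).2.2.2
end

section
/- For every positive integer k, the sequence (t_n) satisfies t_{3k−1} = 1 + t_{k−1}. -/
/-!
Put `D = 2 * (1 + 2 * v₃(k) - t (k - 1))`, so that `t k = 1 / D`. If `t (3k - 1) = 1 + t (k - 1)`,
then unfolding the recurrence three times and using `v₃(3k) = v₃(k) + 1` gives
`t (3k) = 1 / (D + 2)`, `t (3k + 1) = (D + 2) / (2 (D + 1))` and `t (3k + 2) = (D + 1) / D = 1 + t k`,
which is the inductive step (`block_step`).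

The divisions are legitimate because `D > 0`, i.e. `t n < 1 + 2 * v₃(n + 1)` for every `n`. This bound
is proved simultaneously, by strong induction. The formulas above give `t (3k), t (3k + 1) < 1`, and
for `n = 3k + 2` the bound follows from the one at `k` via `t n = 1 + t k` (`bound_of_block`).
-/

/-- One block of three consecutive terms: the claim for `k` passes to `k + 1`, and the two terms
strictly between the indices `3k + 2` and `3k + 5` lie below `1`. -/
theorem block_step (t : ℕ → ℚ)
    (ht : ∀ n : ℕ, 1 ≤ n →
      t n = 1 / (2 * (1 + 2 * (padicValNat 3 n : ℚ) - t (n - 1))))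
    (k : ℕ) (hk : t (3 * k + 2) = 1 + t k)
    (hb : t k < 1 + 2 * (padicValNat 3 (k + 1) : ℚ)) :
    t (3 * (k + 1)) < 1 ∧ t (3 * (k + 1) + 1) < 1 ∧
      t (3 * (k + 1) + 2) = 1 + t (k + 1) := by
  have v0 : padicValNat 3 (3 * (k + 1)) = padicValNat 3 (k + 1) + 1 := by
    haveI : Fact (Nat.Prime 3) := ⟨Nat.prime_three⟩
    rw [padicValNat.mul (by norm_num) (by omega), padicValNat.self (by norm_num), add_comm]
  have v1 : padicValNat 3 (3 * (k + 1) + 1) = 0 :=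
    padicValNat.eq_zero_of_not_dvd (by omega)
  have v2 : padicValNat 3 (3 * (k + 1) + 2) = 0 :=
    padicValNat.eq_zero_of_not_dvd (by omega)
  have e := ht (k + 1) (by omega)
  have e0 := ht (3 * (k + 1)) (by omega)
  have e1 := ht (3 * (k + 1) + 1) (by omega)
  have e2 := ht (3 * (k + 1) + 2) (by omega)
  rw [show k + 1 - 1 = k by omega] at e
  rw [v0, show 3 * (k + 1) - 1 = 3 * k + 2 by omega, hk] at e0
  rw [v1, show 3 * (k + 1) + 1 - 1 = 3 * (k + 1) by omega] at e1
  rw [v2, show 3 * (k + 1) + 2 - 1 = 3 * (k + 1) + 1 by omega] at e2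
  push_cast at e0 e1 e2
  obtain ⟨D, hD⟩ : ∃ D : ℚ, D = 2 * (1 + 2 * (padicValNat 3 (k + 1) : ℚ) - t k) := ⟨_, rfl⟩
  have hpos : 0 < D := by linarith
  rw [← hD] at e
  have f0 : t (3 * (k + 1)) = 1 / (D + 2) := by
    rw [e0, hD]; congr 1; ring
  have f1 : t (3 * (k + 1) + 1) = (D + 2) / (2 * (D + 1)) := by
    have : 2 * (1 + 2 * 0 - 1 / (D + 2)) = 2 * (D + 1) / (D + 2) := by field_simp; ring
    rw [e1, f0, this, one_div_div]
  have f2 : t (3 * (k + 1) + 2) = (D + 1) / D := by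
    have : 2 * (1 + 2 * 0 - (D + 2) / (2 * (D + 1))) = D / (D + 1) := by field_simp; ring
    rw [e2, f1, this, one_div_div]
  refine ⟨?_, ?_, ?_⟩
  · rw [f0, div_lt_one (by linarith)]; linarith
  · rw [f1, div_lt_one (by linarith)]; linarith
  · rw [f2, e]; field_simp

/-- The bound at each index of the block `3j, 3j + 1, 3j + 2`, given the bound at `j`. -/
theorem bound_of_block (t : ℕ → ℚ) (j : ℕ)
    (h0 : t (3 * j) < 1) (h1 : t (3 * j + 1) < 1) (h2 : t (3 * j + 2) = 1 + t j)
    (hb : t j < 1 + 2 * (padicValNat 3 (j + 1) : ℚ)) (n : ℕ) (hn : n / 3 = j) :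
    t n < 1 + 2 * (padicValNat 3 (n + 1) : ℚ) := by
  have hv : (0 : ℚ) ≤ padicValNat 3 (n + 1) := Nat.cast_nonneg _
  obtain rfl | rfl | rfl : n = 3 * j ∨ n = 3 * j + 1 ∨ n = 3 * j + 2 := by omega
  · linarith
  · linarith
  · have v0 : padicValNat 3 (3 * j + 2 + 1) = padicValNat 3 (j + 1) + 1 := by
      haveI : Fact (Nat.Prime 3) := ⟨Nat.prime_three⟩
      rw [show 3 * j + 2 + 1 = 3 * (j + 1) by ring,
        padicValNat.mul (by norm_num) (by omega), padicValNat.self (by norm_num), add_comm]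
    rw [v0, h2]
    push_cast
    linarith

theorem t_three_k_sub_one
    (t : ℕ → ℚ) (ht0 : t 0 = 0)
    (ht : ∀ n : ℕ, 1 ≤ n →
      t n = 1 / (2 * (1 + 2 * (padicValNat 3 n : ℚ) - t (n - 1)))) :
    ∀ k : ℕ, 1 ≤ k → t (3 * k - 1) = 1 + t (k - 1) := by
  have key : ∀ k : ℕ, (t (3 * k) < 1 ∧ t (3 * k + 1) < 1 ∧ t (3 * k + 2) = 1 + t k) ∧
      t k < 1 + 2 * (padicValNat 3 (k + 1) : ℚ) := by
    intro k
    induction k using Nat.strong_induction_on with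
    | _ k ih =>
      rcases k with _ | k
      · have v2 : padicValNat 3 2 = 0 := padicValNat.eq_zero_of_not_dvd (by norm_num)
        have t1 : t 1 = 1 / 2 := by rw [ht 1 le_rfl]; norm_num [ht0]
        have t2 : t 2 = 1 := by rw [ht 2 (by norm_num), v2]; norm_num [t1]
        norm_num [ht0, t1, t2]
      · obtain ⟨⟨-, -, q⟩, b⟩ := ih k (by omega)
        obtain ⟨⟨h0, h1, h2⟩, hb⟩ := ih ((k + 1) / 3) (by omega)
        exact ⟨block_step t ht k q b, bound_of_block t _ h0 h1 h2 hb (k + 1) rfl⟩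
  intro k hk
  obtain ⟨k, rfl⟩ : ∃ m, k = m + 1 := ⟨k - 1, by omega⟩
  exact (key k).1.2.2
end

section
/- For every positive integer k, the sequence (t_n) satisfies: t_{3k} lies in the open interval (0, 1/2), t_{3k+1} lies in the open interval (1/2, 1), and t_{3k+2} lies in the open interval (1, ∞). -/
/-!
The sequence satisfies the self-similarity `t (3k) = t k / (1 + 2 t k)`, that is,
`1 / t (3k) = 2 + 1 / t k` for `k ≥ 1`. The recurrence then gives
`t (3k+1) = (1 + 2 t k) / (2 (1 + t k))` and `t (3k+2) = 1 + t k` (`residue_formulas`), so that all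
three interval claims reduce to `0 < t k`. Self-similarity and positivity are proved together by
strong induction (`pos_and_self_similar`): positivity at `n = 3m + r` comes from the formulas at
`m < n`, and self-similarity at `k + 1` comes from `t (3k+2) = 1 + t k` together with
`v₃ (3(k+1)) = 1 + v₃ (k+1)`.
-/

theorem residue_formulas (t : ℕ → ℚ)
    (ht : ∀ n : ℕ, 1 ≤ n →
      t n = 1 / (2 * (1 + 2 * (padicValNat 3 n : ℚ) - t (n - 1))))
    (k : ℕ) (hk : 0 ≤ t k) (h : t (3 * k) = t k / (1 + 2 * t k)) :
    t (3 * k + 1) = (1 + 2 * t k) / (2 * (1 + t k)) ∧ t (3 * k + 2) = 1 + t k := by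
  have v1 : padicValNat 3 (3 * k + 1) = 0 := padicValNat.eq_zero_of_not_dvd (by omega)
  have v2 : padicValNat 3 (3 * k + 2) = 0 := padicValNat.eq_zero_of_not_dvd (by omega)
  have hb : 1 + 2 * t k ≠ 0 := by positivity
  have hc : 1 + t k ≠ 0 := by positivity
  have h1 : t (3 * k + 1) = (1 + 2 * t k) / (2 * (1 + t k)) := by
    have e : 1 - t k / (1 + 2 * t k) = (1 + t k) / (1 + 2 * t k) := by
      field_simp; ring
    rw [ht _ (by omega), v1, Nat.add_sub_cancel, h, Nat.cast_zero, mul_zero, add_zero, e]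
    field_simp
  refine ⟨h1, ?_⟩
  have e : 1 - (1 + 2 * t k) / (2 * (1 + t k)) = 1 / (2 * (1 + t k)) := by
    field_simp; ring
  rw [ht _ (by omega), v2, show 3 * k + 2 - 1 = 3 * k + 1 by omega, h1, Nat.cast_zero,
    mul_zero, add_zero, e]
  field_simp

theorem pos_and_self_similar (t : ℕ → ℚ) (ht0 : t 0 = 0)
    (ht : ∀ n : ℕ, 1 ≤ n →
      t n = 1 / (2 * (1 + 2 * (padicValNat 3 n : ℚ) - t (n - 1))))
    (n : ℕ) : (1 ≤ n → 0 < t n) ∧ t (3 * n) = t n / (1 + 2 * t n) := by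
  induction n using Nat.strong_induction_on with
  | _ n ih =>
  rcases n with _ | k
  · simp [ht0]
  have nonneg : ∀ m < k + 1, 0 ≤ t m := by
    intro m hm
    rcases Nat.eq_zero_or_pos m with rfl | h
    · exact ht0.ge
    · exact ((ih m hm).1 h).le
  have pos : 0 < t (k + 1) := by
    obtain ⟨m, hm⟩ : ∃ m, k + 1 = 3 * m ∨ k + 1 = 3 * m + 1 ∨ k + 1 = 3 * m + 2 :=
      ⟨(k + 1) / 3, by omega⟩
    have hmk : m < k + 1 := by omega
    have h0 := nonneg m hmk
    have hs := (ih m hmk).2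
    obtain ⟨h1, h2⟩ := residue_formulas t ht m h0 hs
    rcases hm with hm | hm | hm <;> rw [hm]
    · have := (ih m hmk).1 (by omega)
      rw [hs]; positivity
    · rw [h1]; positivity
    · rw [h2]; positivity
  refine ⟨fun _ => pos, ?_⟩
  have h2 := (residue_formulas t ht k (nonneg k (by omega)) (ih k (by omega)).2).2
  have v3 : padicValNat 3 (3 * (k + 1)) = 1 + padicValNat 3 (k + 1) := by
    haveI : Fact (Nat.Prime 3) := ⟨Nat.prime_three⟩
    rw [padicValNat.mul (by norm_num) (by omega), padicValNat_self]
  have hk1 := ht (k + 1) (by omega)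
  rw [Nat.add_sub_cancel] at hk1
  rw [ht (3 * (k + 1)) (by omega), v3, show 3 * (k + 1) - 1 = 3 * k + 2 by omega, h2]
  set d : ℚ := 1 + 2 * (padicValNat 3 (k + 1) : ℚ) - t k with hd
  -- The recurrence at `k + 1` reads `t (k + 1) = 1 / (2 * d)`, so positivity forces `0 < d`.
  have d_pos : 0 < d := by
    rw [hk1] at pos
    linarith [one_div_pos.mp pos]
  have e : 1 + 2 * ((1 + padicValNat 3 (k + 1) : ℕ) : ℚ) - (1 + t k) = d + 1 := by
    push_cast; rw [hd]; ring
  rw [e, hk1]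
  field_simp

theorem t_intervals
    (t : ℕ → ℚ) (ht0 : t 0 = 0)
    (ht : ∀ n : ℕ, 1 ≤ n →
      t n = 1 / (2 * (1 + 2 * (padicValNat 3 n : ℚ) - t (n - 1)))) :
    ∀ k : ℕ, 1 ≤ k →
      t (3 * k) ∈ Set.Ioo (0 : ℚ) (1 / 2) ∧
      t (3 * k + 1) ∈ Set.Ioo (1 / 2 : ℚ) 1 ∧
      t (3 * k + 2) ∈ Set.Ioi (1 : ℚ) := by
  intro k hk
  obtain ⟨hp, hs⟩ := pos_and_self_similar t ht0 ht k
  have pos := hp hk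
  obtain ⟨h1, h2⟩ := residue_formulas t ht k pos.le hs
  rw [h1, h2, hs]
  refine ⟨⟨by positivity, ?_⟩, ⟨?_, ?_⟩, ?_⟩
  · rw [div_lt_div_iff₀ (by positivity) (by positivity)]; linarith
  · rw [div_lt_div_iff₀ (by positivity) (by positivity)]; linarith
  · rw [div_lt_one (by positivity)]; linarith
  · rw [Set.mem_Ioi]; linarith
end

section
/- For every positive integer n, the integer part (floor) of t_{n−1} equals the 3-adic valuation of n: ⌊t_{n−1}⌋ = v₃(n). -/
/-!
The sequence has a self-similar ternary structure: with `x = t k`,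
`t (3k) = x / (1 + 2x)`, `t (3k+1) = (1 + 2x) / (2(1 + x))`, `t (3k+2) = 1 + x`.
For `x ≥ 0` the first two values lie in `[0, 1)`, so their floor is `0`, matching `v₃(3k+1)` and
`v₃(3k+2)`; the third gives `⌊t (3k+2)⌋ = 1 + ⌊t k⌋`, matching `v₃(3(k+1)) = 1 + v₃(k+1)`.

The last two formulas follow from the first by the recursion (`block_of_mul_three`). The first
passes from `k` to `k + 1` by applying the recursion to `t (3k+2) = 1 + t k`, which gives
`1 / t (3(k+1)) = 2 + 1 / t (k+1)` (`mul_three_succ`); this needs `t k < 1 + 2 v₃(k+1)`, a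
consequence of the floor formula at `k`. Hence nonnegativity, the floor formula and the first
formula are proved together by strong induction.
-/

lemma padicValNat_three_mul_succ (k : ℕ) :
    padicValNat 3 (3 * k + 3) = padicValNat 3 (k + 1) + 1 := by
  have : Fact (Nat.Prime 3) := ⟨Nat.prime_three⟩
  rw [show 3 * k + 3 = 3 * (k + 1) by ring, padicValNat.mul (by norm_num) (by omega),
    padicValNat_self, add_comm]

/-- The recursion where the 3-adic valuation vanishes. -/
lemma step_of_not_dvd {t : ℕ → ℚ}
    (ht : ∀ n : ℕ, 1 ≤ n →
      t n = 1 / (2 * (1 + 2 * (padicValNat 3 n : ℚ) - t (n - 1))))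
    {n : ℕ} (hn : ¬ 3 ∣ n + 1) : t (n + 1) = 1 / (2 * (1 - t n)) := by
  rw [ht (n + 1) (by omega), padicValNat.eq_zero_of_not_dvd hn]
  simp

/-- The value of `t` at `3k` determines the next two values. -/
lemma block_of_mul_three {t : ℕ → ℚ}
    (ht : ∀ n : ℕ, 1 ≤ n →
      t n = 1 / (2 * (1 + 2 * (padicValNat 3 n : ℚ) - t (n - 1))))
    {k : ℕ} (h0 : 0 ≤ t k) (h : t (3 * k) = t k / (1 + 2 * t k)) :
    t (3 * k + 1) = (1 + 2 * t k) / (2 * (1 + t k)) ∧ t (3 * k + 2) = 1 + t k := by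
  have h1 : t (3 * k + 1) = (1 + 2 * t k) / (2 * (1 + t k)) := by
    rw [step_of_not_dvd ht (by omega), h]
    have e : 1 - t k / (1 + 2 * t k) = (1 + t k) / (1 + 2 * t k) := by field_simp; ring
    rw [e]
    field_simp
  refine ⟨h1, ?_⟩
  rw [step_of_not_dvd ht (n := 3 * k + 1) (by omega), h1]
  have e : 1 - (1 + 2 * t k) / (2 * (1 + t k)) = 1 / (2 * (1 + t k)) := by field_simp; ring
  rw [e]
  field_simp

lemma mul_three_succ {t : ℕ → ℚ}
    (ht : ∀ n : ℕ, 1 ≤ n →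
      t n = 1 / (2 * (1 + 2 * (padicValNat 3 n : ℚ) - t (n - 1))))
    {k : ℕ} (hlt : t k < 1 + 2 * (padicValNat 3 (k + 1) : ℚ)) (h2 : t (3 * k + 2) = 1 + t k) :
    t (3 * (k + 1)) = t (k + 1) / (1 + 2 * t (k + 1)) := by
  have e1 := ht (k + 1) (by omega)
  have e3 := ht (3 * k + 3) (by omega)
  rw [padicValNat_three_mul_succ, show 3 * k + 3 - 1 = 3 * k + 2 by omega, h2] at e3
  rw [show k + 1 - 1 = k by omega] at e1
  rw [show 3 * (k + 1) = 3 * k + 3 by ring, e3, e1]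
  push_cast
  -- The reciprocal of `t (k + 1)` is `2d`, and that of `t (3k + 3)` is `2(d + 1)`.
  obtain ⟨d, hd⟩ : ∃ d, d = 1 + 2 * (padicValNat 3 (k + 1) : ℚ) - t k := ⟨_, rfl⟩
  have hpos : 0 < d := by linarith
  rw [← hd, show 1 + 2 * ((padicValNat 3 (k + 1) : ℚ) + 1) - (1 + t k) = d + 1 by
    rw [hd]; ring]
  field_simp

/-- The floor formula at `n`, with the two facts that the strong induction carries along. -/
lemma nonneg_floor_mul_three {t : ℕ → ℚ} (ht0 : t 0 = 0)
    (ht : ∀ n : ℕ, 1 ≤ n →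
      t n = 1 / (2 * (1 + 2 * (padicValNat 3 n : ℚ) - t (n - 1)))) (n : ℕ) :
    0 ≤ t n ∧ ⌊t n⌋ = (padicValNat 3 (n + 1) : ℤ) ∧ t (3 * n) = t n / (1 + 2 * t n) := by
  induction n using Nat.strong_induction_on with
  | _ n ih =>
  rcases Nat.eq_zero_or_pos n with rfl | hn
  · simp [ht0]
  rw [← and_assoc]
  constructor
  · obtain ⟨k, hk⟩ : ∃ k, n = 3 * k ∨ n = 3 * k + 1 ∨ n = 3 * k + 2 := ⟨n / 3, by omega⟩
    obtain ⟨h0, hf, h3⟩ := ih k (by omega)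
    obtain ⟨h1, h2⟩ := block_of_mul_three ht h0 h3
    rcases hk with rfl | rfl | rfl
    · rw [padicValNat.eq_zero_of_not_dvd (by omega), h3, Nat.cast_zero, Int.floor_eq_zero_iff]
      have : 0 ≤ t k / (1 + 2 * t k) := by positivity
      exact ⟨this, this, by rw [div_lt_one (by positivity)]; linarith⟩
    · rw [padicValNat.eq_zero_of_not_dvd (by omega), h1, Nat.cast_zero, Int.floor_eq_zero_iff]
      have : 0 ≤ (1 + 2 * t k) / (2 * (1 + t k)) := by positivity
      exact ⟨this, this, by rw [div_lt_one (by positivity)]; linarith⟩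
    · rw [h2, show 3 * k + 2 + 1 = 3 * k + 3 by ring, padicValNat_three_mul_succ]
      refine ⟨by positivity, ?_⟩
      rw [add_comm, Int.floor_add_one, hf]
      push_cast
      rfl
  · obtain ⟨m, rfl⟩ : ∃ m, n = m + 1 := ⟨n - 1, by omega⟩
    obtain ⟨h0, hf, h3⟩ := ih m (by omega)
    refine mul_three_succ ht ?_ (block_of_mul_three ht h0 h3).2
    have hlt := Int.lt_floor_add_one (t m)
    rw [hf, Int.cast_natCast] at hlt
    have : (0 : ℚ) ≤ (padicValNat 3 (m + 1) : ℚ) := Nat.cast_nonneg _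
    linarith

theorem t_floor_eq_padicValNat
    (t : ℕ → ℚ) (ht0 : t 0 = 0)
    (ht : ∀ n : ℕ, 1 ≤ n →
      t n = 1 / (2 * (1 + 2 * (padicValNat 3 n : ℚ) - t (n - 1)))) :
    ∀ n : ℕ, 1 ≤ n → ⌊t (n - 1)⌋ = (padicValNat 3 n : ℤ) := by
  intro n hn
  have h := (nonneg_floor_mul_three ht0 ht (n - 1)).2.1
  rwa [Nat.sub_add_cancel hn] at h
end

section
/- For every positive integer n, t_n = f(t_{n−1})/2, where f(x) = 1/(1 + 2⌊x⌋ − x); that is, t_n = 1/(2(1 + 2⌊t_{n−1}⌋ − t_{n−1})). -/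
/-!
The claim is equivalent to `⌊t n⌋ = v₃(n + 1)` for all `n`. It follows from the self-similarity
  `t (3n) = t n / (1 + 2 t n)`, `t (3n+1) = (1 + 2 t n) / (2 (1 + t n))`, `t (3n+2) = 1 + t n`:
for `t n ≥ 0` the first two values lie in `[0, 1)`, matching `v₃(3n+1) = v₃(3n+2) = 0`, and the
third gives `⌊t (3n+2)⌋ = 1 + ⌊t n⌋`, matching `v₃(3n+3) = 1 + v₃(n+1)`.
Nonnegativity, the floor formula and the identity for `t (3n)` are proved together by strong
induction: the floor formula at `n` gives `t n < 1 + v₃(n+1)`, which keeps the denominator of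
`t (n+1)` positive, and the identity for `t (3n)` implies the other two.
-/

/-- The identity for `t (3n)` propagates to `t (3n+1)` and `t (3n+2)`. -/
lemma t_triple_step (t : ℕ → ℚ)
    (ht : ∀ n : ℕ, 1 ≤ n →
      t n = 1 / (2 * (1 + 2 * (padicValNat 3 n : ℚ) - t (n - 1))))
    (n : ℕ) (h0 : 0 ≤ t n) (h3 : t (3 * n) = t n / (1 + 2 * t n)) :
    t (3 * n + 1) = (1 + 2 * t n) / (2 * (1 + t n)) ∧ t (3 * n + 2) = 1 + t n := by
  have v1 : padicValNat 3 (3 * n + 1) = 0 := padicValNat.eq_zero_of_not_dvd (by omega)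
  have v2 : padicValNat 3 (3 * n + 2) = 0 := padicValNat.eq_zero_of_not_dvd (by omega)
  have p1 : 1 + 2 * t n ≠ 0 := by positivity
  have p2 : 1 + t n ≠ 0 := by positivity
  have e1 : t (3 * n + 1) = (1 + 2 * t n) / (2 * (1 + t n)) := by
    rw [ht _ (by omega), v1, Nat.add_sub_cancel, h3]
    have : 1 + 2 * ((0 : ℕ) : ℚ) - t n / (1 + 2 * t n) = (1 + t n) / (1 + 2 * t n) := by
      field_simp
      push_cast
      ring
    rw [this]
    field_simp
  refine ⟨e1, ?_⟩
  rw [ht _ (by omega), v2, show 3 * n + 2 - 1 = 3 * n + 1 by omega, e1]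
  have : 1 + 2 * ((0 : ℕ) : ℚ) - (1 + 2 * t n) / (2 * (1 + t n)) = 1 / (2 * (1 + t n)) := by
    field_simp
    push_cast
    ring
  rw [this]
  field_simp

lemma t_floor_aux (t : ℕ → ℚ) (ht0 : t 0 = 0)
    (ht : ∀ n : ℕ, 1 ≤ n →
      t n = 1 / (2 * (1 + 2 * (padicValNat 3 n : ℚ) - t (n - 1)))) (n : ℕ) :
    0 ≤ t n ∧ ⌊t n⌋ = (padicValNat 3 (n + 1) : ℤ) ∧ t (3 * n) = t n / (1 + 2 * t n) := by
  induction n using Nat.strong_induction_on with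
  | _ n ih =>
  rcases n with _ | m
  · simp [ht0]
  obtain ⟨m0, mf, m3⟩ := ih m (by omega)
  obtain ⟨-, m2⟩ := t_triple_step t ht m m0 m3
  have v3 (k : ℕ) : padicValNat 3 (3 * (k + 1)) = 1 + padicValNat 3 (k + 1) := by
    rw [padicValNat.mul (by norm_num) (by omega), padicValNat_self]
  have hlt : t m < padicValNat 3 (m + 1) + 1 := by
    have := Int.lt_floor_add_one (t m)
    rw [mf] at this
    exact_mod_cast this
  have hv : (0 : ℚ) ≤ padicValNat 3 (m + 1) := by positivity
  have hD : 0 < 1 + 2 * (padicValNat 3 (m + 1) : ℚ) - t m := by linarith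
  have e := ht (m + 1) (by omega)
  rw [Nat.add_sub_cancel] at e
  refine ⟨by rw [e]; positivity, ?_, ?_⟩
  · -- `m + 1 = 3 * q + r` with `q < m + 1`, so the formulas at `q` are available.
    obtain ⟨q, hq, hr⟩ : ∃ q < m + 1,
        m + 1 = 3 * q ∨ m + 1 = 3 * q + 1 ∨ m + 1 = 3 * q + 2 :=
      ⟨(m + 1) / 3, by omega, by omega⟩
    obtain ⟨q0, qf, q3⟩ := ih q hq
    obtain ⟨q1, q2⟩ := t_triple_step t ht q q0 q3
    rcases hr with h | h | h <;> rw [h]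
    · rw [padicValNat.eq_zero_of_not_dvd (by omega), q3, Nat.cast_zero, Int.floor_eq_zero_iff]
      refine ⟨by positivity, ?_⟩
      rw [div_lt_one (by positivity)]
      linarith
    · rw [padicValNat.eq_zero_of_not_dvd (by omega), q1, Nat.cast_zero, Int.floor_eq_zero_iff]
      refine ⟨by positivity, ?_⟩
      rw [div_lt_one (by positivity)]
      linarith
    · rw [q2, show 3 * q + 2 + 1 = 3 * (q + 1) by ring, v3, add_comm (1 : ℚ), Int.floor_add_one,
        qf]
      push_cast
      ring
  · rw [ht (3 * (m + 1)) (by omega), v3, show 3 * (m + 1) - 1 = 3 * m + 2 by omega, m2, e]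
    generalize (padicValNat 3 (m + 1) : ℕ) = v at *
    -- With `t (m + 1) = 1 / (2 * D)`, both sides equal `1 / (2 * (D + 1))`.
    obtain ⟨D, hDe⟩ : ∃ D : ℚ, D = 1 + 2 * (v : ℚ) - t m := ⟨_, rfl⟩
    have h2 : 1 + 2 * ((1 + v : ℕ) : ℚ) - (1 + t m) = D + 1 := by
      rw [hDe]
      push_cast
      ring
    rw [h2, ← hDe]
    rw [← hDe] at hD
    field_simp

theorem t_newman_recurrence
    (t : ℕ → ℚ) (ht0 : t 0 = 0)
    (ht : ∀ n : ℕ, 1 ≤ n →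
      t n = 1 / (2 * (1 + 2 * (padicValNat 3 n : ℚ) - t (n - 1)))) :
    ∀ n : ℕ, 1 ≤ n →
      t n = 1 / (2 * (1 + 2 * (⌊t (n - 1)⌋ : ℚ) - t (n - 1))) := by
  intro n hn
  have h := (t_floor_aux t ht0 ht (n - 1)).2.1
  rw [Nat.sub_add_cancel hn] at h
  rw [h, Int.cast_natCast]
  exact ht n hn
end

section
/- The map n ↦ t_n is a bijection from ℕ onto the set of nonnegative rational numbers: every q ∈ ℚ with q ≥ 0 equals t_n for exactly one n ∈ ℕ. -/
/-!
The sequence is the level-order reading of a ternary tree: a node with value `x` has the children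
`x / (2x + 1)`, `(2x + 1) / (2x + 2)` and `x + 1`, that is, these are the values of `t` at `3n`,
`3n + 1` and `3n + 2` when `x = t n` (`t_children`). The three maps send `[0, ∞)` bijectively
onto `[0, 1/2)`, `[1/2, 1)` and `[1, ∞)`, which partition `[0, ∞)`. Hence a value determines the
last ternary digit of its index and the value at the parent, which gives injectivity (`t_inj`).
Conversely, passing from `a / b` to its parent by the inverse maps lowers `a + b` unless `a = 0`,
a Euclidean descent which gives surjectivity (`t_surj`).
-/

/-- The values at `3n + 1` and `3n + 2`, deduced from the value at `3n`: the indices are prime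
to `3`, so the valuation term vanishes. -/
lemma t_last_two_children (t : ℕ → ℚ)
    (ht : ∀ n : ℕ, 1 ≤ n →
      t n = 1 / (2 * (1 + 2 * (padicValNat 3 n : ℚ) - t (n - 1)))) (n : ℕ)
    (hn : 0 ≤ t n) (h : t (3 * n) = t n / (2 * t n + 1)) :
    t (3 * n + 1) = (2 * t n + 1) / (2 * t n + 2) ∧ t (3 * n + 2) = t n + 1 := by
  have h1 : t (3 * n + 1) = (2 * t n + 1) / (2 * t n + 2) := by
    rw [ht _ (by omega), padicValNat.eq_zero_of_not_dvd (by omega), Nat.add_sub_cancel, h]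
    have e : 2 * (1 + 2 * ((0 : ℕ) : ℚ) - t n / (2 * t n + 1))
        = (2 * t n + 2) / (2 * t n + 1) := by
      push_cast
      field_simp
      ring
    rw [e, one_div_div]
  refine ⟨h1, ?_⟩
  rw [ht _ (by omega), padicValNat.eq_zero_of_not_dvd (by omega),
    show 3 * n + 2 - 1 = 3 * n + 1 by omega, h1]
  have e : 2 * (1 + 2 * ((0 : ℕ) : ℚ) - (2 * t n + 1) / (2 * t n + 2)) = 1 / (t n + 1) := by
    push_cast
    field_simp
    ring
  rw [e, one_div_one_div]

/-- Positivity is proved together with the value at `3n`: it excludes a zero denominator in the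
recurrence, and itself comes from the tree relations at the parent. -/
lemma t_aux (t : ℕ → ℚ) (ht0 : t 0 = 0)
    (ht : ∀ n : ℕ, 1 ≤ n →
      t n = 1 / (2 * (1 + 2 * (padicValNat 3 n : ℚ) - t (n - 1)))) (n : ℕ) :
    0 ≤ t n ∧ (0 < n → 0 < t n) ∧ t (3 * n) = t n / (2 * t n + 1) := by
  induction n using Nat.strong_induction_on with
  | _ n ih =>
    rcases n with _ | k
    · simp [ht0]
    have hpos : 0 < t (k + 1) := by
      obtain ⟨a0, apos, a3⟩ := ih ((k + 1) / 3) (by omega)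
      obtain ⟨b1, b2⟩ := t_last_two_children t ht _ a0 a3
      have hc : k + 1 = 3 * ((k + 1) / 3) ∨ k + 1 = 3 * ((k + 1) / 3) + 1 ∨
          k + 1 = 3 * ((k + 1) / 3) + 2 := by omega
      rcases hc with hc | hc | hc
      · have := apos (by omega)
        rw [hc, a3]
        positivity
      · rw [hc, b1]
        positivity
      · rw [hc, b2]
        positivity
    refine ⟨hpos.le, fun _ => hpos, ?_⟩
    obtain ⟨c0, -, c3⟩ := ih k (by omega)
    obtain ⟨-, d2⟩ := t_last_two_children t ht _ c0 c3
    have hy := ht (k + 1) (by omega)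
    have hv : padicValNat 3 (3 * (k + 1)) = padicValNat 3 (k + 1) + 1 := by
      have : Fact (Nat.Prime 3) := ⟨Nat.prime_three⟩
      rw [padicValNat.mul (by norm_num) (by omega), padicValNat.self (by norm_num), add_comm]
    have h3 := ht (3 * (k + 1)) (by omega)
    rw [hv, show 3 * (k + 1) - 1 = 3 * k + 2 by omega, d2] at h3
    rw [Nat.add_sub_cancel] at hy
    -- Positivity of `t (k + 1)` makes the recurrence invertible.
    have hD : 2 * (1 + 2 * (padicValNat 3 (k + 1) : ℚ) - t k) = 1 / t (k + 1) := by
      rw [hy, one_div_one_div]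
    have e : 2 * (1 + 2 * ((padicValNat 3 (k + 1) + 1 : ℕ) : ℚ) - (t k + 1))
        = (2 * t (k + 1) + 1) / t (k + 1) := by
      have : (2 * t (k + 1) + 1) / t (k + 1) = 2 + 1 / t (k + 1) := by
        field_simp
      rw [this, ← hD]
      push_cast
      ring
    rw [h3, e, one_div_div]

lemma t_children (t : ℕ → ℚ) (ht0 : t 0 = 0)
    (ht : ∀ n : ℕ, 1 ≤ n →
      t n = 1 / (2 * (1 + 2 * (padicValNat 3 n : ℚ) - t (n - 1)))) (n : ℕ) :
    0 ≤ t n ∧ t (3 * n) = t n / (2 * t n + 1) ∧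
      t (3 * n + 1) = (2 * t n + 1) / (2 * t n + 2) ∧ t (3 * n + 2) = t n + 1 := by
  obtain ⟨h0, -, h3⟩ := t_aux t ht0 ht n
  exact ⟨h0, h3, t_last_two_children t ht n h0 h3⟩

/-- Each value lies in the interval of its ternary digit, and the parent's value is recovered from
it by the inverse of the corresponding map. -/
lemma t_parent (t : ℕ → ℚ)
    (H : ∀ n, 0 ≤ t n ∧ t (3 * n) = t n / (2 * t n + 1) ∧
      t (3 * n + 1) = (2 * t n + 1) / (2 * t n + 2) ∧ t (3 * n + 2) = t n + 1)
    (n : ℕ) :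
    (n % 3 = 0 ∧ t n < 1 / 2 ∧ t (n / 3) = t n / (1 - 2 * t n)) ∨
    (n % 3 = 1 ∧ 1 / 2 ≤ t n ∧ t n < 1 ∧ t (n / 3) = (2 * t n - 1) / (2 - 2 * t n)) ∨
    (n % 3 = 2 ∧ 1 ≤ t n ∧ t (n / 3) = t n - 1) := by
  obtain ⟨h, h0, h1, h2⟩ := H (n / 3)
  have hc : n % 3 = 0 ∧ n = 3 * (n / 3) ∨ n % 3 = 1 ∧ n = 3 * (n / 3) + 1 ∨
      n % 3 = 2 ∧ n = 3 * (n / 3) + 2 := by omega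
  generalize n / 3 = m at *
  generalize t m = x at *
  rcases hc with ⟨hr, hc⟩ | ⟨hr, hc⟩ | ⟨hr, hc⟩
  · rw [← hc] at h0
    refine Or.inl ⟨hr, ?_, ?_⟩
    · rw [h0, div_lt_div_iff₀ (by positivity) (by norm_num)]
      linarith
    · have e : 1 - 2 * t n = 1 / (2 * x + 1) := by
        rw [h0]
        field_simp
        ring
      rw [e, h0]
      field_simp
  · rw [← hc] at h1
    refine Or.inr (Or.inl ⟨hr, ?_, ?_, ?_⟩)
    · rw [h1, div_le_div_iff₀ (by norm_num) (by positivity)]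
      linarith
    · rw [h1, div_lt_one (by positivity)]
      linarith
    · have e : 2 - 2 * t n = 1 / (x + 1) := by
        rw [h1]
        field_simp
        ring
      have e' : 2 * t n - 1 = x / (x + 1) := by
        rw [h1]
        field_simp
        ring
      rw [e, e']
      field_simp
  · rw [← hc] at h2
    exact Or.inr (Or.inr ⟨hr, by linarith, by linarith⟩)

lemma t_inj (t : ℕ → ℚ)
    (H : ∀ n, 0 ≤ t n ∧ t (3 * n) = t n / (2 * t n + 1) ∧
      t (3 * n + 1) = (2 * t n + 1) / (2 * t n + 2) ∧ t (3 * n + 2) = t n + 1)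
    (N : ℕ) : ∀ m n, m + n ≤ N → t m = t n → m = n := by
  induction N with
  | zero => intro m n h _; omega
  | succ N ih =>
    intro m n hN h
    by_cases h0 : m + n = 0
    · omega
    have key : m % 3 = n % 3 ∧ t (m / 3) = t (n / 3) := by
      rcases t_parent t H m with ⟨a, b, c⟩ | ⟨a, b, b', c⟩ | ⟨a, b, c⟩ <;>
      rcases t_parent t H n with ⟨a', d, c'⟩ | ⟨a', d, d', c'⟩ | ⟨a', d, c'⟩ <;>
      first
      | exact ⟨a.trans a'.symm, by rw [c, c', h]⟩
      | (exfalso; linarith)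
    have := ih (m / 3) (n / 3) (by omega) key.2
    omega

lemma t_surj (t : ℕ → ℚ)
    (H : ∀ n, 0 ≤ t n ∧ t (3 * n) = t n / (2 * t n + 1) ∧
      t (3 * n + 1) = (2 * t n + 1) / (2 * t n + 2) ∧ t (3 * n + 2) = t n + 1)
    (h0 : t 0 = 0) (N : ℕ) :
    ∀ a b : ℕ, 0 < b → a + b ≤ N → ∃ n, t n = (a : ℚ) / b := by
  induction N with
  | zero => intro a b hb h; omega
  | succ N ih =>
    intro a b hb h
    have hb' : (0 : ℚ) < b := by exact_mod_cast hb
    rcases Nat.eq_zero_or_pos a with rfl | ha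
    · exact ⟨0, by simp [h0]⟩
    have ha' : (0 : ℚ) < a := by exact_mod_cast ha
    rcases lt_or_ge (2 * a) b with h1 | h1
    · obtain ⟨c, rfl⟩ := Nat.exists_eq_add_of_lt h1
      obtain ⟨n, hn⟩ := ih a (c + 1) (by omega) (by omega)
      refine ⟨3 * n, ?_⟩
      rw [(H n).2.1, hn]
      push_cast
      field_simp
      ring
    rcases lt_or_ge a b with h2 | h2
    · obtain ⟨c, rfl⟩ := Nat.exists_eq_add_of_lt h2
      obtain ⟨d, hd⟩ := Nat.exists_eq_add_of_le h1
      obtain ⟨n, hn⟩ := ih d (2 * (c + 1)) (by omega) (by omega)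
      refine ⟨3 * n + 1, ?_⟩
      have had : (a : ℚ) = c + 1 + d := by
        have : a = c + 1 + d := by omega
        exact_mod_cast this
      rw [(H n).2.2.1, hn]
      push_cast
      rw [had]
      field_simp
      ring
    · obtain ⟨c, rfl⟩ := Nat.exists_eq_add_of_le h2
      obtain ⟨n, hn⟩ := ih c b hb (by omega)
      refine ⟨3 * n + 2, ?_⟩
      rw [(H n).2.2.2, hn]
      push_cast
      field_simp
      ring

theorem t_enumerates_nonneg_rationals
    (t : ℕ → ℚ) (ht0 : t 0 = 0)
    (ht : ∀ n : ℕ, 1 ≤ n →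
      t n = 1 / (2 * (1 + 2 * (padicValNat 3 n : ℚ) - t (n - 1)))) :
    ∀ q : ℚ, 0 ≤ q → ∃! n : ℕ, t n = q := by
  intro q hq
  have H := t_children t ht0 ht
  obtain ⟨n, hn⟩ := t_surj t H ht0 _ q.num.toNat q.den q.den_pos le_rfl
  have hqn : ((q.num.toNat : ℕ) : ℚ) = (q.num : ℚ) := by
    exact_mod_cast Int.toNat_of_nonneg (Rat.num_nonneg.mpr hq)
  rw [hqn, Rat.num_div_den] at hn
  exact ⟨n, hn, fun m hm => t_inj t H _ m n le_rfl (hm.trans hn.symm)⟩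
end

section
/- For every positive integer n, the entries of the n-th node of the quinary tree A₅ satisfy: c_n = v₅(n) (the 5-adic valuation of n), a_n and b_n are positive coprime integers, and 3a_n ≥ b_n − 6a_n c_n. -/
/-!
The proof propagates one invariant from a node to its five children: `a` and `b` are positive and
coprime, `c` is nonnegative, and `b ≤ (6c + 3) a`.

The bound on `b` is what makes the subtractions in the first three children positive, and each
child satisfies the bound again by a linear inequality in the monomials `a`, `b`, `c * a`.

For coprimality, write a child as `(x, y)` or, when `y` is visibly a multiple of three, as
`(x, 3z)`. The pair `(x, y)` (resp. `(x, z)`) is the image of `(a, b)`, or of `(a, b / 3)` when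
`3 ∣ b`, under an integer matrix of determinant `±1`, so it is coprime. In the case `(x, 3z)`, one
has `3 ∤ b` and `x` is congruent to a unit multiple of `b` modulo three, so `x` is prime to three.

Finally `c` is reset to zero at indices prime to five and increases by one from `n` to `5n`, which
is the recursion of the 5-adic valuation.
-/

/-- The invariant of a node `(a, b, c)` of the tree. -/
def GoodNode (a b c : ℤ) : Prop :=
  0 ≤ c ∧ 0 < a ∧ 0 < b ∧ IsCoprime a b ∧ b ≤ (6 * c + 3) * a

/-- Coprimality passes from `(a, b)` to any pair `(x, y)` whose integer span contains `a` and `b`;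
the coefficients `p, q, r, s` are the entries of the inverse matrix. -/
lemma isCoprime_of_combination {a b x y : ℤ} (p q r s : ℤ) (h : IsCoprime a b)
    (ha : p * x + q * y = a) (hb : r * x + s * y = b) : IsCoprime x y := by
  obtain ⟨u, v, huv⟩ := h
  exact ⟨u * p + v * r, u * q + v * s, by rw [← huv, ← ha, ← hb]; ring⟩

lemma isCoprime_three_of_not_dvd {x : ℤ} (h : ¬ 3 ∣ x) : IsCoprime x 3 :=
  ((Int.prime_three.coprime_iff_not_dvd).2 h).symm

lemma goodNode_children_of_not_dvd {a b c : ℤ} (h : GoodNode a b c) (h3 : ¬ 3 ∣ b) :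
    GoodNode (3 * (4 * c + 3) * a - 2 * b) (3 * (6 * c + 5) * a - 3 * b) 0 ∧
    GoodNode ((6 * c + 5) * a - b) (6 * (c + 1) * a - b) 0 ∧
    GoodNode (6 * (c + 1) * a - b) (3 * a) 0 ∧
    GoodNode a (3 * a + b) (c + 1) ∧
    GoodNode (3 * a + b) (6 * a + 3 * b) 0 := by
  obtain ⟨hc, ha, hb, hab, hle⟩ := h
  have hca : 0 ≤ c * a := mul_nonneg hc ha.le
  refine ⟨⟨le_rfl, by linarith, by linarith, ?_, by linarith⟩,
    ⟨le_rfl, by linarith, by linarith, ?_, by linarith⟩,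
    ⟨le_rfl, by linarith, by linarith, ?_, by linarith⟩,
    ⟨by linarith, ha, by linarith, ?_, by linarith⟩,
    ⟨le_rfl, by linarith, by linarith, ?_, by linarith⟩⟩
  · rw [show 3 * (6 * c + 5) * a - 3 * b = 3 * ((6 * c + 5) * a - b) by ring]
    refine IsCoprime.mul_right (isCoprime_three_of_not_dvd ?_)
      (isCoprime_of_combination (-1) 2 (-(6 * c + 5)) (3 * (4 * c + 3)) hab (by ring) (by ring))
    rw [mul_assoc]
    generalize (4 * c + 3) * a = m
    omega
  · exact isCoprime_of_combination (-1) 1 (-(6 * (c + 1))) (6 * c + 5) hab (by ring) (by ring)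
  · refine IsCoprime.mul_right (isCoprime_three_of_not_dvd ?_)
      (isCoprime_of_combination 0 1 (-1) (6 * (c + 1)) hab (by ring) (by ring))
    rw [mul_assoc]
    generalize (c + 1) * a = m
    omega
  · exact isCoprime_of_combination 1 0 (-3) 1 hab (by ring) (by ring)
  · rw [show 6 * a + 3 * b = 3 * (2 * a + b) by ring]
    exact IsCoprime.mul_right (isCoprime_three_of_not_dvd (by omega))
      (isCoprime_of_combination 1 (-1) (-2) 3 hab (by ring) (by ring))

lemma goodNode_children_of_dvd {a b c : ℤ} (h : GoodNode a b c) (h3 : 3 ∣ b) :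
    GoodNode ((4 * c + 3) * a - 2 * (b / 3)) ((6 * c + 5) * a - b) 0 ∧
    GoodNode ((6 * c + 5) * a - b) (6 * (c + 1) * a - b) 0 ∧
    GoodNode (2 * (c + 1) * a - b / 3) a 0 ∧
    GoodNode a (3 * a + b) (c + 1) ∧
    GoodNode (a + b / 3) (2 * a + b) 0 := by
  obtain ⟨hc, ha, hb, hab, hle⟩ := h
  obtain ⟨d, rfl⟩ := h3
  rw [Int.mul_ediv_cancel_left d (by norm_num : (3 : ℤ) ≠ 0)]
  have hca : 0 ≤ c * a := mul_nonneg hc ha.le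
  have had : IsCoprime a d := hab.of_mul_right_right
  refine ⟨⟨le_rfl, by linarith, by linarith, ?_, by linarith⟩,
    ⟨le_rfl, by linarith, by linarith, ?_, by linarith⟩,
    ⟨le_rfl, by linarith, by linarith, ?_, by linarith⟩,
    ⟨by linarith, ha, by linarith, ?_, by linarith⟩,
    ⟨le_rfl, by linarith, by linarith, ?_, by linarith⟩⟩
  · exact isCoprime_of_combination (-3) 2 (-(6 * c + 5)) (4 * c + 3) had (by ring) (by ring)
  · exact isCoprime_of_combination (-1) 1 (-(6 * (c + 1))) (6 * c + 5) hab (by ring) (by ring)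
  · exact isCoprime_of_combination 0 1 (-1) (2 * (c + 1)) had (by ring) (by ring)
  · exact isCoprime_of_combination 1 0 (-3) 1 hab (by ring) (by ring)
  · exact isCoprime_of_combination 3 (-1) (-2) 1 had (by ring) (by ring)

theorem quinary_tree_basic_properties
    (a b c : ℕ → ℤ)
    (h1 : a 1 = 1 ∧ b 1 = 3 ∧ c 1 = 0)
    (hndvd : ∀ n : ℕ, 1 ≤ n → ¬ (3 ∣ b n) →
      a (5 * n - 3) = 3 * (4 * c n + 3) * a n - 2 * b n ∧
      b (5 * n - 3) = 3 * (6 * c n + 5) * a n - 3 * b n ∧ c (5 * n - 3) = 0 ∧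
      a (5 * n - 2) = (6 * c n + 5) * a n - b n ∧
      b (5 * n - 2) = 6 * (c n + 1) * a n - b n ∧ c (5 * n - 2) = 0 ∧
      a (5 * n - 1) = 6 * (c n + 1) * a n - b n ∧
      b (5 * n - 1) = 3 * a n ∧ c (5 * n - 1) = 0 ∧
      a (5 * n) = a n ∧ b (5 * n) = 3 * a n + b n ∧ c (5 * n) = c n + 1 ∧
      a (5 * n + 1) = 3 * a n + b n ∧ b (5 * n + 1) = 6 * a n + 3 * b n ∧
      c (5 * n + 1) = 0)
    (hdvd : ∀ n : ℕ, 1 ≤ n → 3 ∣ b n →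
      a (5 * n - 3) = (4 * c n + 3) * a n - 2 * (b n / 3) ∧
      b (5 * n - 3) = (6 * c n + 5) * a n - b n ∧ c (5 * n - 3) = 0 ∧
      a (5 * n - 2) = (6 * c n + 5) * a n - b n ∧
      b (5 * n - 2) = 6 * (c n + 1) * a n - b n ∧ c (5 * n - 2) = 0 ∧
      a (5 * n - 1) = 2 * (c n + 1) * a n - b n / 3 ∧
      b (5 * n - 1) = a n ∧ c (5 * n - 1) = 0 ∧
      a (5 * n) = a n ∧ b (5 * n) = 3 * a n + b n ∧ c (5 * n) = c n + 1 ∧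
      a (5 * n + 1) = a n + b n / 3 ∧ b (5 * n + 1) = 2 * a n + b n ∧
      c (5 * n + 1) = 0)
    : ∀ n : ℕ, 1 ≤ n →
      c n = (padicValNat 5 n : ℤ) ∧ 0 < a n ∧ 0 < b n ∧
      IsCoprime (a n) (b n) ∧ b n - 6 * a n * c n ≤ 3 * a n := by
  have hchild : ∀ m : ℕ, 1 ≤ m → GoodNode (a m) (b m) (c m) →
      (GoodNode (a (5 * m - 3)) (b (5 * m - 3)) (c (5 * m - 3)) ∧
        GoodNode (a (5 * m - 2)) (b (5 * m - 2)) (c (5 * m - 2)) ∧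
        GoodNode (a (5 * m - 1)) (b (5 * m - 1)) (c (5 * m - 1)) ∧
        GoodNode (a (5 * m)) (b (5 * m)) (c (5 * m)) ∧
        GoodNode (a (5 * m + 1)) (b (5 * m + 1)) (c (5 * m + 1))) ∧
      c (5 * m - 3) = 0 ∧ c (5 * m - 2) = 0 ∧ c (5 * m - 1) = 0 ∧ c (5 * m) = c m + 1 ∧
      c (5 * m + 1) = 0 := by
    intro m hm hg
    by_cases h3 : 3 ∣ b m
    · obtain ⟨a1, b1, c1, a2, b2, c2, a3, b3, c3, a4, b4, c4, a5, b5, c5⟩ := hdvd m hm h3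
      rw [a1, b1, c1, a2, b2, c2, a3, b3, c3, a4, b4, c4, a5, b5, c5]
      exact ⟨goodNode_children_of_dvd hg h3, rfl, rfl, rfl, rfl, rfl⟩
    · obtain ⟨a1, b1, c1, a2, b2, c2, a3, b3, c3, a4, b4, c4, a5, b5, c5⟩ := hndvd m hm h3
      rw [a1, b1, c1, a2, b2, c2, a3, b3, c3, a4, b4, c4, a5, b5, c5]
      exact ⟨goodNode_children_of_not_dvd hg h3, rfl, rfl, rfl, rfl, rfl⟩
  have hval : ∀ k : ℕ, ¬ 5 ∣ k → (0 : ℤ) = (padicValNat 5 k : ℤ) := fun k hk => by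
    rw [padicValNat.eq_zero_of_not_dvd hk, Nat.cast_zero]
  have key : ∀ n : ℕ, 1 ≤ n → GoodNode (a n) (b n) (c n) ∧ c n = (padicValNat 5 n : ℤ) := by
    intro n
    induction n using Nat.strong_induction_on with
    | _ n ih =>
      intro hn
      obtain rfl | hn2 : n = 1 ∨ 2 ≤ n := by omega
      · obtain ⟨ha, hb, hc⟩ := h1
        rw [ha, hb, hc]
        exact ⟨⟨le_rfl, by norm_num, by norm_num, isCoprime_one_left, by norm_num⟩, by simp⟩
      · -- The parent of `n` is `m = (n + 3) / 5`.
        obtain ⟨m, hm, hmn, hcases⟩ : ∃ m, 1 ≤ m ∧ m < n ∧ (n = 5 * m - 3 ∨ n = 5 * m - 2 ∨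
            n = 5 * m - 1 ∨ n = 5 * m ∨ n = 5 * m + 1) :=
          ⟨(n + 3) / 5, by omega, by omega, by omega⟩
        obtain ⟨hg, hcm⟩ := ih m hmn hm
        obtain ⟨⟨g1, g2, g3, g4, g5⟩, c1, c2, c3, c4, c5⟩ := hchild m hm hg
        rcases hcases with rfl | rfl | rfl | rfl | rfl
        · exact ⟨g1, c1.trans (hval _ (by omega))⟩
        · exact ⟨g2, c2.trans (hval _ (by omega))⟩
        · exact ⟨g3, c3.trans (hval _ (by omega))⟩
        · refine ⟨g4, ?_⟩
          have : Fact (Nat.Prime 5) := ⟨by norm_num⟩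
          rw [c4, hcm, padicValNat.mul (by norm_num) (by omega), padicValNat_self]
          push_cast
          ring
        · exact ⟨g5, c5.trans (hval _ (by omega))⟩
  intro n hn
  obtain ⟨⟨_, ha, hb, hab, hle⟩, hc⟩ := key n hn
  exact ⟨hc, ha, hb, hab, by linarith⟩
end

section
/- Let s₀ = 0 and s_n = a_n/b_n (as a rational number) for n ≥ 1, where a_n, b_n come from the quinary tree A₅. Then for every positive integer n, s_n = 1/(3(1 + 2·v₅(n) − s_{n−1})), where v₅(n) is the 5-adic valuation of n. -/
/-!
Write `t = s (n - 1)`, `C = c n` and `u = 1 + 2 * C - t`, and suppose that the recurrence holds at `n`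
with `c n` in place of the valuation, so that `b n = 3 * u * a n`. Substituting this into the rules of
the tree, a common factor (`a n` or `3 * a n`) cancels from each child,
and both rules give the same five ratios
`(2t+1)/(3t+2)`, `(3t+2)/(3t+3)`, `t+1`, `1/(3+3u)`, `(1+u)/(2+3u)` (`child_ratios`).
Each of the last four is obtained from its predecessor by `x ↦ 1 / (3 * (1 + 2 * c - x))`, where `c = 0`
except for the fourth child, whose label is `c = C + 1`. The first child `5n - 3` comes after
`5n - 4 = 5(n-1) + 1`, the last child of `n - 1`, whose ratio is `(3t+1)/(6t+3)`
(the fifth ratio for `n - 1`, rewritten using `3 * u * t = 1` for the `u` of `n - 1`); this also holds for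
`n = 1`, with `t = s 0 = 0` and `s 1 = 1/3`. So the recurrence follows by strong induction, carried
together with `0 ≤ s (n - 1)` and `0 < s n`, which keep all denominators nonzero. Finally
`c n = padicValNat 5 n`, since `c` is incremented by `n ↦ 5n` and vanishes off the multiples of `5`.
-/

/-- The recurrence at `n`, in terms of the label `c n`, cleared of denominators and strengthened by the
positivity that the induction needs. -/
def GoodAt (c : ℕ → ℤ) (s : ℕ → ℚ) (n : ℕ) : Prop :=
  0 ≤ s (n - 1) ∧ 0 < s n ∧ s n * (3 * (1 + 2 * (c n : ℚ) - s (n - 1))) = 1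

lemma div_eq_div_of_common_factor {X Y x y : ℚ} (k : ℚ) (hk : k ≠ 0) (hX : X = k * x)
    (hY : Y = k * y) : X / Y = x / y := by
  rw [hX, hY, mul_div_mul_left _ _ hk]

/-- Every index `k ≥ 2` is one of the five children of some `n` with `1 ≤ n < k`. -/
lemma exists_parent (k : ℕ) (hk : 2 ≤ k) : ∃ n, 1 ≤ n ∧ n < k ∧
    (k = 5 * n - 3 ∨ k = 5 * n - 2 ∨ k = 5 * n - 1 ∨ k = 5 * n ∨ k = 5 * n + 1) :=
  ⟨(k + 3) / 5, by omega, by omega, by omega⟩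

/-- The ratios of the five children of a node at which the recurrence holds. They do not depend on
whether `3 ∣ b n`: the two rules differ only by common factors of numerator and denominator. -/
lemma child_ratios
    (a b c : ℕ → ℤ)
    (hndvd : ∀ n : ℕ, 1 ≤ n → ¬ (3 ∣ b n) →
      a (5 * n - 3) = 3 * (4 * c n + 3) * a n - 2 * b n ∧
      b (5 * n - 3) = 3 * (6 * c n + 5) * a n - 3 * b n ∧ c (5 * n - 3) = 0 ∧
      a (5 * n - 2) = (6 * c n + 5) * a n - b n ∧
      b (5 * n - 2) = 6 * (c n + 1) * a n - b n ∧ c (5 * n - 2) = 0 ∧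
      a (5 * n - 1) = 6 * (c n + 1) * a n - b n ∧
      b (5 * n - 1) = 3 * a n ∧ c (5 * n - 1) = 0 ∧
      a (5 * n) = a n ∧ b (5 * n) = 3 * a n + b n ∧ c (5 * n) = c n + 1 ∧
      a (5 * n + 1) = 3 * a n + b n ∧ b (5 * n + 1) = 6 * a n + 3 * b n ∧
      c (5 * n + 1) = 0)
    (hdvd : ∀ n : ℕ, 1 ≤ n → 3 ∣ b n →
      a (5 * n - 3) = (4 * c n + 3) * a n - 2 * (b n / 3) ∧
      b (5 * n - 3) = (6 * c n + 5) * a n - b n ∧ c (5 * n - 3) = 0 ∧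
      a (5 * n - 2) = (6 * c n + 5) * a n - b n ∧
      b (5 * n - 2) = 6 * (c n + 1) * a n - b n ∧ c (5 * n - 2) = 0 ∧
      a (5 * n - 1) = 2 * (c n + 1) * a n - b n / 3 ∧
      b (5 * n - 1) = a n ∧ c (5 * n - 1) = 0 ∧
      a (5 * n) = a n ∧ b (5 * n) = 3 * a n + b n ∧ c (5 * n) = c n + 1 ∧
      a (5 * n + 1) = a n + b n / 3 ∧ b (5 * n + 1) = 2 * a n + b n ∧
      c (5 * n + 1) = 0)
    (s : ℕ → ℚ)
    (hs : ∀ n : ℕ, 1 ≤ n → s n = (a n : ℚ) / (b n : ℚ))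
    (n : ℕ) (hn : 1 ≤ n) (t u : ℚ) (ht : t = s (n - 1)) (hu : u = 1 + 2 * (c n : ℚ) - t)
    (hg : GoodAt c s n) :
    s (5 * n - 3) = (2 * t + 1) / (3 * t + 2) ∧ s (5 * n - 2) = (3 * t + 2) / (3 * t + 3) ∧
    s (5 * n - 1) = (t + 1) / 1 ∧ s (5 * n) = 1 / (3 + 3 * u) ∧
    s (5 * n + 1) = (1 + u) / (2 + 3 * u) := by
  obtain ⟨-, hpos, hrec⟩ := hg
  rw [← ht, ← hu] at hrec
  have hsn := hs n hn
  have ha : (a n : ℚ) ≠ 0 := by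
    intro h; rw [hsn, h] at hpos; simp at hpos
  have hb : (b n : ℚ) ≠ 0 := by
    intro h; rw [hsn, h] at hpos; simp at hpos
  have hbu : (b n : ℚ) = 3 * u * a n := by
    rw [hsn] at hrec; field_simp at hrec; linarith
  have ht' : t = 1 + 2 * (c n : ℚ) - u := by rw [hu]; ring
  have h3a : (3 * a n : ℚ) ≠ 0 := mul_ne_zero three_ne_zero ha
  rw [hs (5 * n - 3) (by omega), hs (5 * n - 2) (by omega), hs (5 * n - 1) (by omega),
    hs (5 * n) (by omega), hs (5 * n + 1) (by omega)]
  by_cases hd : (3 : ℤ) ∣ b n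
  · obtain ⟨e1, f1, -, e2, f2, -, e3, f3, -, e4, f4, -, e5, f5, -⟩ := hdvd n hn hd
    obtain ⟨k, hk⟩ := hd
    have hk3 : b n / 3 = k := by omega
    have hku : (k : ℚ) = u * a n := by
      rw [hk] at hbu; push_cast at hbu; linarith
    rw [e1, f1, e2, f2, e3, f3, e4, f4, e5, f5, hk3]
    push_cast
    rw [hbu, hku, ht']
    refine ⟨?_, ?_, ?_, ?_, ?_⟩ <;>
      exact div_eq_div_of_common_factor (a n : ℚ) ha (by ring) (by ring)
  · obtain ⟨e1, f1, -, e2, f2, -, e3, f3, -, e4, f4, -, e5, f5, -⟩ := hndvd n hn hd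
    rw [e1, f1, e2, f2, e3, f3, e4, f4, e5, f5]
    push_cast
    rw [hbu, ht']
    refine ⟨div_eq_div_of_common_factor (3 * a n : ℚ) h3a (by ring) (by ring),
      div_eq_div_of_common_factor (a n : ℚ) ha (by ring) (by ring),
      div_eq_div_of_common_factor (3 * a n : ℚ) h3a (by ring) (by ring),
      div_eq_div_of_common_factor (a n : ℚ) ha (by ring) (by ring),
      div_eq_div_of_common_factor (3 * a n : ℚ) h3a (by ring) (by ring)⟩

theorem quinary_tree_s_recurrence
    (a b c : ℕ → ℤ)
    (h1 : a 1 = 1 ∧ b 1 = 3 ∧ c 1 = 0)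
    (hndvd : ∀ n : ℕ, 1 ≤ n → ¬ (3 ∣ b n) →
      a (5 * n - 3) = 3 * (4 * c n + 3) * a n - 2 * b n ∧
      b (5 * n - 3) = 3 * (6 * c n + 5) * a n - 3 * b n ∧ c (5 * n - 3) = 0 ∧
      a (5 * n - 2) = (6 * c n + 5) * a n - b n ∧
      b (5 * n - 2) = 6 * (c n + 1) * a n - b n ∧ c (5 * n - 2) = 0 ∧
      a (5 * n - 1) = 6 * (c n + 1) * a n - b n ∧
      b (5 * n - 1) = 3 * a n ∧ c (5 * n - 1) = 0 ∧
      a (5 * n) = a n ∧ b (5 * n) = 3 * a n + b n ∧ c (5 * n) = c n + 1 ∧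
      a (5 * n + 1) = 3 * a n + b n ∧ b (5 * n + 1) = 6 * a n + 3 * b n ∧
      c (5 * n + 1) = 0)
    (hdvd : ∀ n : ℕ, 1 ≤ n → 3 ∣ b n →
      a (5 * n - 3) = (4 * c n + 3) * a n - 2 * (b n / 3) ∧
      b (5 * n - 3) = (6 * c n + 5) * a n - b n ∧ c (5 * n - 3) = 0 ∧
      a (5 * n - 2) = (6 * c n + 5) * a n - b n ∧
      b (5 * n - 2) = 6 * (c n + 1) * a n - b n ∧ c (5 * n - 2) = 0 ∧
      a (5 * n - 1) = 2 * (c n + 1) * a n - b n / 3 ∧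
      b (5 * n - 1) = a n ∧ c (5 * n - 1) = 0 ∧
      a (5 * n) = a n ∧ b (5 * n) = 3 * a n + b n ∧ c (5 * n) = c n + 1 ∧
      a (5 * n + 1) = a n + b n / 3 ∧ b (5 * n + 1) = 2 * a n + b n ∧
      c (5 * n + 1) = 0)
    (s : ℕ → ℚ) (hs0 : s 0 = 0)
    (hs : ∀ n : ℕ, 1 ≤ n → s n = (a n : ℚ) / (b n : ℚ)) :
    ∀ n : ℕ, 1 ≤ n →
      s n = 1 / (3 * (1 + 2 * (padicValNat 5 n : ℚ) - s (n - 1))) := by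
  have hc : ∀ n : ℕ, 1 ≤ n → c (5 * n - 3) = 0 ∧ c (5 * n - 2) = 0 ∧ c (5 * n - 1) = 0 ∧
      c (5 * n) = c n + 1 ∧ c (5 * n + 1) = 0 := by
    intro n hn
    by_cases hd : (3 : ℤ) ∣ b n
    · obtain ⟨-, -, g1, -, -, g2, -, -, g3, -, -, g4, -, -, g5⟩ := hdvd n hn hd
      exact ⟨g1, g2, g3, g4, g5⟩
    · obtain ⟨-, -, g1, -, -, g2, -, -, g3, -, -, g4, -, -, g5⟩ := hndvd n hn hd
      exact ⟨g1, g2, g3, g4, g5⟩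
  have hval : ∀ n : ℕ, 1 ≤ n → c n = padicValNat 5 n := by
    intro k
    induction k using Nat.strong_induction_on with
    | _ k ih =>
      intro hk
      rcases hk.eq_or_lt with rfl | hk
      · simp [h1.2.2]
      obtain ⟨n, hn, hnk, hcase⟩ := exists_parent k hk
      obtain ⟨g1, g2, g3, g4, g5⟩ := hc n hn
      by_cases h5 : 5 ∣ k
      · obtain rfl : k = 5 * n := by omega
        have : Fact (Nat.Prime 5) := ⟨by norm_num⟩
        rw [g4, ih n hnk hn, padicValNat.mul (by norm_num) (by omega), padicValNat_self]
        push_cast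
        ring
      · rw [padicValNat.eq_zero_of_not_dvd h5]
        rcases hcase with rfl | rfl | rfl | rfl | rfl
        · simpa using g1
        · simpa using g2
        · simpa using g3
        · omega
        · simpa using g5
  have hs1 : s 1 = 1 / 3 := by
    rw [hs 1 le_rfl, h1.1, h1.2.1]; norm_num
  have key : ∀ n : ℕ, 1 ≤ n → GoodAt c s n := by
    intro k
    induction k using Nat.strong_induction_on with
    | _ k ih =>
      intro hk
      rcases hk.eq_or_lt with rfl | hk
      · simp [GoodAt, hs0, hs1, h1.2.2]
      obtain ⟨n, hn, hnk, hcase⟩ := exists_parent k hk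
      have hg := ih n hnk hn
      obtain ⟨t, ht⟩ : ∃ t, t = s (n - 1) := ⟨_, rfl⟩
      obtain ⟨u, hu⟩ : ∃ u : ℚ, u = 1 + 2 * (c n : ℚ) - t := ⟨_, rfl⟩
      obtain ⟨r1, r2, r3, r4, r5⟩ :=
        child_ratios a b c hndvd hdvd s hs n hn t u ht hu hg
      obtain ⟨g1, g2, g3, g4, g5⟩ := hc n hn
      have ht0 : 0 ≤ t := ht ▸ hg.1
      have hu0 : 0 < u := by
        have h := hg.2.2
        rw [← ht, ← hu] at h
        by_contra! hneg
        nlinarith [mul_nonneg hg.2.1.le (neg_nonneg.2 hneg)]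
      -- `5 * n - 4` is the last child of `n - 1`, or the root when `n = 1`.
      have r0 : s (5 * n - 3 - 1) = (3 * t + 1) / (6 * t + 3) := by
        rcases hn.eq_or_lt with rfl | hn2
        · simp [ht, hs0, hs1]
        · have hg' := ih (n - 1) (by omega) (by omega)
          have h := (child_ratios a b c hndvd hdvd s hs (n - 1) (by omega) _ _ rfl rfl hg').2.2.2.2
          have hrec := hg'.2.2
          rw [← ht] at hrec
          rw [show 5 * n - 3 - 1 = 5 * (n - 1) + 1 by omega, h]
          generalize 1 + 2 * (c (n - 1) : ℚ) - s (n - 1 - 1) = v at hrec ⊢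
          have hv : 0 < v := by
            by_contra! hneg
            nlinarith [mul_nonneg ht0 (neg_nonneg.2 hneg)]
          rw [div_eq_div_iff (by positivity) (by positivity)]
          linear_combination -hrec
      rcases hcase with rfl | rfl | rfl | rfl | rfl
      · rw [GoodAt, r0, r1, g1]
        refine ⟨by positivity, by positivity, ?_⟩
        push_cast
        field_simp
        ring
      · rw [GoodAt, show 5 * n - 2 - 1 = 5 * n - 3 by omega, r1, r2, g2]
        refine ⟨by positivity, by positivity, ?_⟩
        push_cast
        field_simp
        ring
      · rw [GoodAt, show 5 * n - 1 - 1 = 5 * n - 2 by omega, r2, r3, g3]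
        refine ⟨by positivity, by positivity, ?_⟩
        push_cast
        field_simp
        ring
      · rw [GoodAt, r3, r4, g4]
        refine ⟨by positivity, by positivity, ?_⟩
        rw [one_div, inv_mul_eq_one₀ (by positivity), hu]
        push_cast
        ring
      · rw [GoodAt, Nat.add_sub_cancel, r4, r5, g5]
        refine ⟨by positivity, by positivity, ?_⟩
        push_cast
        field_simp
        ring
  intro n hn
  have hrec := (key n hn).2.2
  rw [hval n hn, Int.cast_natCast] at hrec
  exact eq_one_div_of_mul_eq_one_left hrec
end

section
/- For every positive integer k, the sequence (s_n) satisfies s_{5k−1} = 1 + s_{k−1}. -/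
/-!
Off the multiples of `5` the recursion iterates the Möbius map `f x = 1 / (3 * (1 - x))`.
Put `D = 1 + 2 * v₅(m + 1) - s m`, so that `s (m + 1) = 1 / (3 * D)`. If `s (5m + 4) = 1 + s m`,
then `v₅(5m + 5) = v₅(m + 1) + 1` gives `s (5m + 5) = 1 / (3 * (1 + D))`, and four applications of
`f` lead to `1 + 1 / (3 * D) = 1 + s (m + 1)`, so the identity passes from `m` to `m + 1`.

No denominator vanishes on the way as long as `D > 0`, that is, `s m < 1 + 2 * v₅(m + 1)`. This bound
is proved by strong induction together with the identity: if `5 ∤ m + 1`, then `s m` is one of the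
first four values of a block of five (`block`), all of which are less than `1`; if `m + 1 = 5(j + 1)`,
then `s m = 1 + s j`, and the valuation has grown by one as well.
-/

lemma padicValNat_five_of_mod {n : ℕ} (h : n % 5 ≠ 0) : padicValNat 5 n = 0 :=
  padicValNat.eq_zero_of_not_dvd fun hd => h (Nat.mod_eq_zero_of_dvd hd)

lemma padicValNat_five_mul (m : ℕ) :
    padicValNat 5 (5 * m + 5) = padicValNat 5 (m + 1) + 1 := by
  have : Fact (Nat.Prime 5) := ⟨by norm_num⟩
  rw [show 5 * m + 5 = 5 * (m + 1) by ring, padicValNat.mul (by norm_num) (by omega),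
    padicValNat_self, add_comm]

/-- At an index prime to `5` the recursion is `x ↦ 1 / (3 * (1 - x))`. -/
lemma step_of_mod {s : ℕ → ℚ}
    (hs : ∀ n : ℕ, 1 ≤ n →
      s n = 1 / (3 * (1 + 2 * (padicValNat 5 n : ℚ) - s (n - 1))))
    (n : ℕ) (h : (n + 1) % 5 ≠ 0) : s (n + 1) = 1 / (3 * (1 - s n)) := by
  rw [hs (n + 1) (by omega), padicValNat_five_of_mod h]
  simp

/-- The block of five values following `s (5m + 4) = 1 + s m`: the first four are less than `1`,
and the last is `1 + s (m + 1)`. The hypothesis `s m < 1 + 2 * v₅(m + 1)` keeps all denominators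
positive. -/
lemma block {s : ℕ → ℚ}
    (hs : ∀ n : ℕ, 1 ≤ n →
      s n = 1 / (3 * (1 + 2 * (padicValNat 5 n : ℚ) - s (n - 1))))
    (m : ℕ) (hlt : s m < 1 + 2 * (padicValNat 5 (m + 1) : ℚ)) (hm : s (5 * m + 4) = 1 + s m) :
    s (5 * m + 5) < 1 ∧ s (5 * m + 6) < 1 ∧ s (5 * m + 7) < 1 ∧ s (5 * m + 8) < 1 ∧
      s (5 * m + 9) = 1 + s (m + 1) := by
  obtain ⟨D, hD⟩ : ∃ D : ℚ, D = 1 + 2 * (padicValNat 5 (m + 1) : ℚ) - s m := ⟨_, rfl⟩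
  have hpos : 0 < D := by linarith
  have hy : s (m + 1) = 1 / (3 * D) := by
    rw [hs (m + 1) (by omega), hD, Nat.add_sub_cancel]
  have h5 : s (5 * m + 5) = 1 / (3 * (1 + D)) := by
    rw [hs (5 * m + 5) (by omega), padicValNat_five_mul, show 5 * m + 5 - 1 = 5 * m + 4 by omega,
      hm, hD]
    push_cast
    ring_nf
  have h6 : s (5 * m + 6) = (1 + D) / (3 * D + 2) := by
    rw [step_of_mod hs (5 * m + 5) (by omega), h5,
      show 1 - 1 / (3 * (1 + D)) = (3 * D + 2) / (3 * (1 + D)) by field_simp; ring]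
    field_simp
  have h7 : s (5 * m + 7) = (3 * D + 2) / (3 * (2 * D + 1)) := by
    rw [step_of_mod hs (5 * m + 6) (by omega), h6,
      show 1 - (1 + D) / (3 * D + 2) = (2 * D + 1) / (3 * D + 2) by field_simp; ring]
    field_simp
  have h8 : s (5 * m + 8) = (2 * D + 1) / (3 * D + 1) := by
    rw [step_of_mod hs (5 * m + 7) (by omega), h7,
      show 1 - (3 * D + 2) / (3 * (2 * D + 1)) = (3 * D + 1) / (3 * (2 * D + 1)) by
        field_simp; ring]
    field_simp
  have h9 : s (5 * m + 9) = 1 + s (m + 1) := by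
    rw [step_of_mod hs (5 * m + 8) (by omega), h8, hy,
      show 1 - (2 * D + 1) / (3 * D + 1) = D / (3 * D + 1) by field_simp; ring]
    field_simp
  refine ⟨?_, ?_, ?_, ?_, h9⟩
  · rw [h5, div_lt_one (by positivity)]; linarith
  · rw [h6, div_lt_one (by positivity)]; linarith
  · rw [h7, div_lt_one (by positivity)]; linarith
  · rw [h8, div_lt_one (by positivity)]; linarith

/-- Bound and identity together: the bound at `n` uses both facts at some smaller index, and the
identity at `n + 1` uses both facts at `n`. -/
lemma lt_and_eq {s : ℕ → ℚ} (hs0 : s 0 = 0)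
    (hs : ∀ n : ℕ, 1 ≤ n →
      s n = 1 / (3 * (1 + 2 * (padicValNat 5 n : ℚ) - s (n - 1)))) (n : ℕ) :
    s n < 1 + 2 * (padicValNat 5 (n + 1) : ℚ) ∧ s (5 * n + 4) = 1 + s n := by
  have h1 : s 1 = 1 / 3 := by rw [step_of_mod hs 0 (by norm_num), hs0]; norm_num
  have h2 : s 2 = 1 / 2 := by rw [step_of_mod hs 1 (by norm_num), h1]; norm_num
  have h3 : s 3 = 2 / 3 := by rw [step_of_mod hs 2 (by norm_num), h2]; norm_num
  have h4 : s 4 = 1 := by rw [step_of_mod hs 3 (by norm_num), h3]; norm_num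
  induction n using Nat.strong_induction_on with
  | _ n ih =>
    constructor
    · by_cases hn : n % 5 = 4
      · obtain ⟨j, rfl⟩ : ∃ j, n = 5 * j + 4 := ⟨n / 5, by omega⟩
        obtain ⟨hlt, heq⟩ := ih j (by omega)
        rw [heq, padicValNat_five_mul]
        push_cast
        linarith
      · suffices h : s n < 1 by
          have : (0 : ℚ) ≤ (padicValNat 5 (n + 1) : ℚ) := Nat.cast_nonneg _
          linarith
        by_cases hsmall : n < 5
        · -- The initial block `0, 1/3, 1/2, 2/3` has no predecessor `s (5m + 4)`.
          obtain rfl | rfl | rfl | rfl : n = 0 ∨ n = 1 ∨ n = 2 ∨ n = 3 := by omega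
          · rw [hs0]; norm_num
          · rw [h1]; norm_num
          · rw [h2]; norm_num
          · rw [h3]; norm_num
        · obtain ⟨j, hj⟩ : ∃ j, n = 5 * j + 5 ∨ n = 5 * j + 6 ∨ n = 5 * j + 7 ∨ n = 5 * j + 8 :=
            ⟨n / 5 - 1, by omega⟩
          obtain ⟨hlt, heq⟩ := ih j (by omega)
          obtain ⟨b5, b6, b7, b8, -⟩ := block hs j hlt heq
          rcases hj with rfl | rfl | rfl | rfl <;> assumption
    · cases n with
      | zero => simp [h4, hs0]
      | succ m =>
        obtain ⟨hlt, heq⟩ := ih m (by omega)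
        exact (block hs m hlt heq).2.2.2.2

theorem s_five_k_sub_one
    (s : ℕ → ℚ) (hs0 : s 0 = 0)
    (hs : ∀ n : ℕ, 1 ≤ n →
      s n = 1 / (3 * (1 + 2 * (padicValNat 5 n : ℚ) - s (n - 1)))) :
    ∀ k : ℕ, 1 ≤ k → s (5 * k - 1) = 1 + s (k - 1) := by
  intro k hk
  have h := (lt_and_eq hs0 hs (k - 1)).2
  rwa [show 5 * (k - 1) + 4 = 5 * k - 1 by omega] at h
end

section
/- For every positive integer k, the sequence (s_n) satisfies: s_{5k} ∈ (0, 1/3), s_{5k+1} ∈ (1/3, 1/2), s_{5k+2} ∈ (1/2, 2/3), s_{5k+3} ∈ (2/3, 1), and s_{5k+4} ∈ (1, ∞) (all intervals open). -/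
/-!
The sequence is self-similar: `s (5 * k) = s k / (3 * s k + 1)`. Indeed, put `a = s k`. The four
indices following `5 * k` are prime to `5`, so four applications of `x ↦ 1 / (3 * (1 - x))` to
`a / (3 * a + 1)` give explicit fractions in `a`, ending with `s (5 * k + 4) = a + 1`. As
`v₅(5 * (k + 1)) = 1 + v₅(k + 1)`, one more step of the recurrence gives
`1 / s (5 * (k + 1)) = 3 + 3 * (1 + 2 * v₅(k + 1) - a) = 3 + 1 / s (k + 1)`.
Positivity of `s n` for `n ≥ 1` is proved in the same strong induction, and the five intervals
are read off the fractions with `a > 0`.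
-/

/-- The four terms following `s (5 * k)`, in terms of `a = s k`. -/
lemma s_block (s : ℕ → ℚ)
    (hs : ∀ n : ℕ, 1 ≤ n →
      s n = 1 / (3 * (1 + 2 * (padicValNat 5 n : ℚ) - s (n - 1))))
    (k : ℕ) (a : ℚ) (ha : 0 ≤ a) (h : s (5 * k) = a / (3 * a + 1)) :
    s (5 * k + 1) = (3 * a + 1) / (3 * (2 * a + 1)) ∧
    s (5 * k + 2) = (2 * a + 1) / (3 * a + 2) ∧
    s (5 * k + 3) = (3 * a + 2) / (3 * (a + 1)) ∧
    s (5 * k + 4) = a + 1 := by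
  have step : ∀ n x : ℚ, ∀ m : ℕ, ¬ 5 ∣ m + 1 → s m = x → 3 * (1 - x) * n = 1 →
      s (m + 1) = n := by
    intro n x m hm hx hn
    rw [hs (m + 1) (by omega), padicValNat.eq_zero_of_not_dvd hm, Nat.add_sub_cancel, hx]
    have h0 : 3 * (1 - x) ≠ 0 := left_ne_zero_of_mul_eq_one hn
    push_cast
    rw [mul_zero, add_zero, div_eq_iff h0]
    linarith
  have h1 := step ((3 * a + 1) / (3 * (2 * a + 1))) _ (5 * k) (by omega) h (by
    field_simp; ring)
  have h2 := step ((2 * a + 1) / (3 * a + 2)) _ (5 * k + 1) (by omega) h1 (by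
    field_simp; ring)
  have h3 := step ((3 * a + 2) / (3 * (a + 1))) _ (5 * k + 2) (by omega) h2 (by
    field_simp; ring)
  have h4 := step (a + 1) _ (5 * k + 3) (by omega) h3 (by
    field_simp; ring)
  exact ⟨h1, h2, h3, h4⟩

/-- Positivity and the self-similarity of the sequence, which have to be proved together: the
sign of `s n` comes from the formulas at `n / 5`, and the value of `s (5 * n)` from the signs of
`s (n - 1)` and `s n`. -/
lemma s_self_similar (s : ℕ → ℚ) (hs0 : s 0 = 0)
    (hs : ∀ n : ℕ, 1 ≤ n →
      s n = 1 / (3 * (1 + 2 * (padicValNat 5 n : ℚ) - s (n - 1)))) (n : ℕ) :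
    0 ≤ s n ∧ (1 ≤ n → 0 < s n) ∧ s (5 * n) = s n / (3 * s n + 1) := by
  induction n using Nat.strong_induction_on with
  | _ n ih =>
    rcases Nat.eq_zero_or_pos n with rfl | hn
    · simp [hs0]
    have hpos : 0 < s n := by
      obtain ⟨hq0, hq1, hq⟩ := ih (n / 5) (by omega)
      obtain ⟨h1, h2, h3, h4⟩ := s_block s hs _ _ hq0 hq
      have hcases : n = 5 * (n / 5) ∨ n = 5 * (n / 5) + 1 ∨ n = 5 * (n / 5) + 2 ∨
          n = 5 * (n / 5) + 3 ∨ n = 5 * (n / 5) + 4 := by omega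
      rcases hcases with e | e | e | e | e <;> rw [e]
      · have := hq1 (by omega)
        rw [hq]; positivity
      · rw [h1]; positivity
      · rw [h2]; positivity
      · rw [h3]; positivity
      · rw [h4]; positivity
    refine ⟨hpos.le, fun _ => hpos, ?_⟩
    obtain ⟨m, rfl⟩ : ∃ m, n = m + 1 := ⟨n - 1, by omega⟩
    obtain ⟨hm0, -, hm⟩ := ih m (by omega)
    obtain ⟨-, -, -, h4⟩ := s_block s hs _ _ hm0 hm
    have hv : padicValNat 5 (5 * (m + 1)) = 1 + padicValNat 5 (m + 1) := by
      have : Fact (Nat.Prime 5) := ⟨by norm_num⟩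
      rw [padicValNat.mul (by norm_num) (by omega), padicValNat.self (by norm_num)]
    have e := hs (m + 1) (by omega)
    rw [Nat.add_sub_cancel] at e
    rw [hs (5 * (m + 1)) (by omega), hv, show 5 * (m + 1) - 1 = 5 * m + 4 by omega, h4]
    set d : ℚ := 1 + 2 * (padicValNat 5 (m + 1) : ℚ) - s m with hd
    have hdpos : 0 < d := by
      rw [e, one_div_pos] at hpos
      linarith
    have hd' : 1 + 2 * ((1 + padicValNat 5 (m + 1) : ℕ) : ℚ) - (s m + 1) = d + 1 := by
      rw [hd]; push_cast; ring
    rw [hd', e]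
    field_simp
    ring

theorem s_intervals
    (s : ℕ → ℚ) (hs0 : s 0 = 0)
    (hs : ∀ n : ℕ, 1 ≤ n →
      s n = 1 / (3 * (1 + 2 * (padicValNat 5 n : ℚ) - s (n - 1)))) :
    ∀ k : ℕ, 1 ≤ k →
      s (5 * k) ∈ Set.Ioo (0 : ℚ) (1 / 3) ∧
      s (5 * k + 1) ∈ Set.Ioo (1 / 3 : ℚ) (1 / 2) ∧
      s (5 * k + 2) ∈ Set.Ioo (1 / 2 : ℚ) (2 / 3) ∧
      s (5 * k + 3) ∈ Set.Ioo (2 / 3 : ℚ) 1 ∧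
      s (5 * k + 4) ∈ Set.Ioi (1 : ℚ) := by
  intro k hk
  obtain ⟨h0, hpos, h⟩ := s_self_similar s hs0 hs k
  have ha := hpos hk
  obtain ⟨h1, h2, h3, h4⟩ := s_block s hs k _ h0 h
  rw [h, h1, h2, h3, h4]
  generalize s k = a at ha
  refine ⟨⟨by positivity, ?_⟩, ⟨?_, ?_⟩, ⟨?_, ?_⟩, ⟨?_, ?_⟩, ?_⟩
  · rw [div_lt_div_iff₀ (by positivity) (by positivity)]; linarith
  · rw [div_lt_div_iff₀ (by positivity) (by positivity)]; linarith
  · rw [div_lt_div_iff₀ (by positivity) (by positivity)]; linarith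
  · rw [div_lt_div_iff₀ (by positivity) (by positivity)]; linarith
  · rw [div_lt_div_iff₀ (by positivity) (by positivity)]; linarith
  · rw [div_lt_div_iff₀ (by positivity) (by positivity)]; linarith
  · rw [div_lt_one (by positivity)]; linarith
  · rw [Set.mem_Ioi]; linarith
end

section
/- For every positive integer n, s_n = f(s_{n−1})/3, where f(x) = 1/(1 + 2⌊x⌋ − x); that is, s_n = 1/(3(1 + 2⌊s_{n−1}⌋ − s_{n−1})). -/
/-!
It suffices to show `⌊s n⌋ = v₅(n + 1)` for all `n`. The reason is self-similarity: writing
`x = s n`, the five consecutive terms starting at index `5 * n` are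
`x / (1 + 3x)`, `(1 + 3x) / (3(1 + 2x))`, `(1 + 2x) / (2 + 3x)`, `(2 + 3x) / (3(1 + x))`, `1 + x`.
For `x ≥ 0` the first four lie in `[0, 1)`, and `5` does not divide the following index; the last
one has floor `⌊x⌋ + 1`, matching `v₅(5 * n + 5) = v₅(n + 1) + 1`. Moreover, with
`D = 3(1 + 2 v₅(n + 1) - x)` (positive because `x < v₅(n + 1) + 1`), one has `s (n + 1) = 1 / D` and
`s (5 * n + 5) = 1 / (D + 3) = s (n + 1) / (1 + 3 * s (n + 1))`, so the pattern propagates to the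
next block. A strong induction carries the block identity and the floor bounds together.
-/

lemma padicValNat_five_succ {m r : ℕ} (hr : r < 4) : padicValNat 5 (5 * m + r + 1) = 0 :=
  padicValNat.eq_zero_of_not_dvd (by omega)

lemma padicValNat_five_mul_add_five (m : ℕ) :
    padicValNat 5 (5 * m + 4 + 1) = padicValNat 5 (m + 1) + 1 := by
  have : Fact (Nat.Prime 5) := ⟨by norm_num⟩
  rw [show 5 * m + 4 + 1 = 5 * (m + 1) by ring, padicValNat.mul (by norm_num) (by omega),
    padicValNat_self, add_comm]

/-- The first term of a block of five determines the other four. -/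
lemma block_values {s : ℕ → ℚ}
    (hs : ∀ n : ℕ, s (n + 1) = 1 / (3 * (1 + 2 * (padicValNat 5 (n + 1) : ℚ) - s n)))
    {m : ℕ} (hx : 0 ≤ s m) (h0 : s (5 * m) = s m / (1 + 3 * s m)) :
    s (5 * m + 1) = (1 + 3 * s m) / (3 * (1 + 2 * s m)) ∧
    s (5 * m + 2) = (1 + 2 * s m) / (2 + 3 * s m) ∧
    s (5 * m + 3) = (2 + 3 * s m) / (3 * (1 + s m)) ∧
    s (5 * m + 4) = 1 + s m := by
  have v0 := padicValNat_five_succ (m := m) (r := 0) (by norm_num)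
  have v1 := padicValNat_five_succ (m := m) (r := 1) (by norm_num)
  have v2 := padicValNat_five_succ (m := m) (r := 2) (by norm_num)
  have v3 := padicValNat_five_succ (m := m) (r := 3) (by norm_num)
  have e0 := hs (5 * m)
  have e1 := hs (5 * m + 1)
  have e2 := hs (5 * m + 2)
  have e3 := hs (5 * m + 3)
  simp only [add_zero] at v0
  rw [v0, h0] at e0
  rw [v1] at e1
  rw [v2] at e2
  rw [v3] at e3
  generalize s m = x at *
  have p1 : (1 + 3 * x) ≠ 0 := by positivity
  have p2 : (1 + 2 * x) ≠ 0 := by positivity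
  have p3 : (2 + 3 * x) ≠ 0 := by positivity
  have p4 : (1 + x) ≠ 0 := by positivity
  have f1 : s (5 * m + 1) = (1 + 3 * x) / (3 * (1 + 2 * x)) := by
    rw [e0, show 1 + 2 * ((0 : ℕ) : ℚ) - x / (1 + 3 * x) = (1 + 2 * x) / (1 + 3 * x) by
      push_cast; field_simp; ring]
    field_simp
  have f2 : s (5 * m + 2) = (1 + 2 * x) / (2 + 3 * x) := by
    rw [e1, f1, show 1 + 2 * ((0 : ℕ) : ℚ) - (1 + 3 * x) / (3 * (1 + 2 * x))
      = (2 + 3 * x) / (3 * (1 + 2 * x)) by push_cast; field_simp; ring]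
    field_simp
  have f3 : s (5 * m + 3) = (2 + 3 * x) / (3 * (1 + x)) := by
    rw [e2, f2, show 1 + 2 * ((0 : ℕ) : ℚ) - (1 + 2 * x) / (2 + 3 * x)
      = (1 + x) / (2 + 3 * x) by push_cast; field_simp; ring]
    field_simp
  have f4 : s (5 * m + 4) = 1 + x := by
    rw [e3, f3, show 1 + 2 * ((0 : ℕ) : ℚ) - (2 + 3 * x) / (3 * (1 + x))
      = 1 / (3 * (1 + x)) by push_cast; field_simp; ring]
    field_simp
  exact ⟨f1, f2, f3, f4⟩

/-- The induction invariant: `⌊s n⌋ = v₅(n + 1)`, written as a pair of inequalities, together with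
the value of the first term of the block `5 * n, …, 5 * n + 4`. -/
lemma block_invariant {s : ℕ → ℚ} (hs0 : s 0 = 0)
    (hs : ∀ n : ℕ, s (n + 1) = 1 / (3 * (1 + 2 * (padicValNat 5 (n + 1) : ℚ) - s n))) (n : ℕ) :
    ((padicValNat 5 (n + 1) : ℚ) ≤ s n ∧ s n < padicValNat 5 (n + 1) + 1) ∧
      s (5 * n) = s n / (1 + 3 * s n) := by
  induction n using Nat.strong_induction_on with
  | _ n ih =>
  have nonneg : ∀ k < n, 0 ≤ s k := fun k hk => (Nat.cast_nonneg _).trans (ih k hk).1.1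
  constructor
  · rcases Nat.eq_zero_or_pos n with rfl | hn
    · simp [hs0]
    obtain ⟨m, r, hr, rfl⟩ : ∃ m r, r < 5 ∧ n = 5 * m + r :=
      ⟨n / 5, n % 5, Nat.mod_lt _ (by norm_num), (Nat.div_add_mod n 5).symm⟩
    have hm : m < 5 * m + r := by omega
    obtain ⟨⟨hl, hu⟩, h0⟩ := ih m hm
    have hx := nonneg m hm
    obtain ⟨f1, f2, f3, f4⟩ := block_values hs hx h0
    rcases Nat.lt_or_ge r 4 with h4 | h4
    · rw [padicValNat_five_succ h4, Nat.cast_zero, zero_add]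
      interval_cases r
      · rw [add_zero, h0]
        exact ⟨by positivity, by rw [div_lt_one (by positivity)]; linarith⟩
      · rw [f1]
        exact ⟨by positivity, by rw [div_lt_one (by positivity)]; linarith⟩
      · rw [f2]
        exact ⟨by positivity, by rw [div_lt_one (by positivity)]; linarith⟩
      · rw [f3]
        exact ⟨by positivity, by rw [div_lt_one (by positivity)]; linarith⟩
    · obtain rfl : r = 4 := by omega
      rw [padicValNat_five_mul_add_five, f4]
      push_cast
      constructor <;> linarith
  · cases n with
    | zero => simp [hs0]
    | succ k =>
      obtain ⟨⟨hl, hu⟩, h0⟩ := ih k (Nat.lt_succ_self k)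
      have hx := nonneg k (Nat.lt_succ_self k)
      obtain ⟨-, -, -, f4⟩ := block_values hs hx h0
      have e := hs (5 * k + 4)
      rw [padicValNat_five_mul_add_five, f4] at e
      rw [show 5 * (k + 1) = 5 * k + 4 + 1 by ring, e, hs k]
      push_cast
      have hv0 : (0 : ℚ) ≤ padicValNat 5 (k + 1) := Nat.cast_nonneg _
      generalize (padicValNat 5 (k + 1) : ℚ) = v at *
      have hv : 0 < 1 + 2 * v - s k := by linarith
      rw [show 1 + 2 * (v + 1) - (1 + s k) = (1 + 2 * v - s k) + 1 by ring]
      generalize 1 + 2 * v - s k = d at *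
      field_simp

theorem s_newman_recurrence
    (s : ℕ → ℚ) (hs0 : s 0 = 0)
    (hs : ∀ n : ℕ, 1 ≤ n →
      s n = 1 / (3 * (1 + 2 * (padicValNat 5 n : ℚ) - s (n - 1)))) :
    ∀ n : ℕ, 1 ≤ n →
      s n = 1 / (3 * (1 + 2 * (⌊s (n - 1)⌋ : ℚ) - s (n - 1))) := by
  intro n hn
  obtain ⟨k, rfl⟩ : ∃ k, n = k + 1 := ⟨n - 1, by omega⟩
  have hs' : ∀ n : ℕ, s (n + 1) = 1 / (3 * (1 + 2 * (padicValNat 5 (n + 1) : ℚ) - s n)) :=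
    fun n => hs (n + 1) (by omega)
  obtain ⟨⟨hl, hu⟩, -⟩ := block_invariant hs0 hs' k
  have hfloor : ⌊s k⌋ = (padicValNat 5 (k + 1) : ℤ) :=
    Int.floor_eq_iff.mpr ⟨by exact_mod_cast hl, by exact_mod_cast hu⟩
  rw [Nat.add_sub_cancel, hfloor, Int.cast_natCast]
  exact hs' k
end

section
/- Let k ≥ 4 be an integer, f_k(x) = 1/(k(1 + 2⌊x⌋ − x)), and define the real sequence (u_n) by u₀ = 0 and u_n = f_k(u_{n−1}) for n ≥ 1. Then (u_n) is strictly increasing and converges to γ_k = 1/2 − (1/2)√(1 − 4/k); in particular every term u_n lies in [0, γ_k]. -/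
/-!
On `[0, 1)` the floor vanishes, so the recursion reads `u (n + 1) = 1 / (k (1 - u n))`. The number
`γ = 1/2 - √(1 - 4/k)/2` is the smaller root of `k x (1 - x) = 1`, hence a fixed point with
`0 < γ ≤ 1/2`. Since `x ↦ 1 / (k (1 - x))` is increasing, it maps `[0, γ)` into itself, and there
`x < 1 / (k (1 - x))` because `γ (1 - γ) - x (1 - x) = (γ - x) (1 - γ - x) > 0`. So the orbit is
strictly increasing and bounded by `γ`; its limit is a root of `k x (1 - x) = 1` in `[0, γ]`,
and the only one is `γ`.
-/

theorem fk_orbit_increasing_tendsto (k : ℕ) (hk : 4 ≤ k) (u : ℕ → ℝ)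
    (hu0 : u 0 = 0)
    (hu : ∀ n : ℕ, 1 ≤ n →
      u n = 1 / ((k : ℝ) * (1 + 2 * (⌊u (n - 1)⌋ : ℝ) - u (n - 1)))) :
    StrictMono u ∧
    Filter.Tendsto u Filter.atTop
      (nhds (1 / 2 - (1 / 2) * Real.sqrt (1 - 4 / (k : ℝ)))) ∧
    ∀ n : ℕ, u n ∈ Set.Icc (0 : ℝ) (1 / 2 - (1 / 2) * Real.sqrt (1 - 4 / (k : ℝ))) := by
  have hk4 : (4 : ℝ) ≤ k := by exact_mod_cast hk
  have hkpos : (0 : ℝ) < k := by linarith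
  obtain ⟨g, hg⟩ : ∃ g : ℝ, g = 1 / 2 - (1 / 2) * Real.sqrt (1 - 4 / (k : ℝ)) := ⟨_, rfl⟩
  rw [← hg]
  have hs0 : 0 ≤ Real.sqrt (1 - 4 / (k : ℝ)) := Real.sqrt_nonneg _
  have hdiv : 4 / (k : ℝ) ≤ 1 := (div_le_one hkpos).2 hk4
  have hs2 : Real.sqrt (1 - 4 / (k : ℝ)) ^ 2 = 1 - 4 / (k : ℝ) := Real.sq_sqrt (by linarith)
  have hg_half : g ≤ 1 / 2 := by linarith
  have hroot : (k : ℝ) * (g * (1 - g)) = 1 := by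
    have h1 : g * (1 - g) = 1 / k := by
      have : g * (1 - g) = 1 / 4 - Real.sqrt (1 - 4 / (k : ℝ)) ^ 2 / 4 := by rw [hg]; ring
      rw [this, hs2]; ring
    rw [h1]; field_simp
  have hg_pos : 0 < g := by
    by_contra! h
    have : g * (1 - g) ≤ 0 := mul_nonpos_of_nonpos_of_nonneg h (by linarith)
    nlinarith
  -- On `[0, 1)` the floor is zero and the denominator does not vanish.
  have hrec : ∀ n, 0 ≤ u n → u n < g → (k : ℝ) * (u (n + 1) * (1 - u n)) = 1 := by
    intro n h0 h1
    have h := hu (n + 1) (by omega)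
    have hfl : ⌊u n⌋ = 0 := Int.floor_eq_zero_iff.2 ⟨h0, by linarith⟩
    have hne : 1 - u n ≠ 0 := by linarith
    rw [Nat.add_sub_cancel, hfl, Int.cast_zero, mul_zero, add_zero] at h
    rw [h]; field_simp
  have hstep : ∀ n, 0 ≤ u n → u n < g → u n < u (n + 1) ∧ u (n + 1) < g := by
    intro n h0 h1
    have hr : u (n + 1) * (1 - u n) = g * (1 - g) :=
      mul_left_cancel₀ hkpos.ne' ((hrec n h0 h1).trans hroot.symm)
    have hpos : 0 < 1 - u n := by linarith
    constructor
    · refine lt_of_mul_lt_mul_right ?_ hpos.le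
      have : 0 < (g - u n) * (1 - g - u n) := mul_pos (by linarith) (by linarith)
      linarith
    · refine lt_of_mul_lt_mul_right ?_ hpos.le
      rw [hr]
      exact mul_lt_mul_of_pos_left (by linarith) hg_pos
  have hinv : ∀ n, 0 ≤ u n ∧ u n < g := by
    intro n
    induction n with
    | zero => rw [hu0]; exact ⟨le_rfl, hg_pos⟩
    | succ n ih =>
      have := hstep n ih.1 ih.2
      exact ⟨by linarith [ih.1], this.2⟩
  have hmono : StrictMono u := strictMono_nat_of_lt_succ fun n => (hstep n (hinv n).1 (hinv n).2).1
  refine ⟨hmono, ?_, fun n => ⟨(hinv n).1, (hinv n).2.le⟩⟩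
  have hlim := tendsto_atTop_ciSup hmono.monotone
    ⟨g, by rintro _ ⟨n, rfl⟩; exact (hinv n).2.le⟩
  obtain ⟨L, hL⟩ : ∃ L, L = ⨆ i, u i := ⟨_, rfl⟩
  rw [← hL] at hlim
  have hLg : L ≤ g := le_of_tendsto' hlim fun n => (hinv n).2.le
  have hLroot : (k : ℝ) * (L * (1 - L)) = 1 := by
    have h1 : Filter.Tendsto (fun n => (k : ℝ) * (u (n + 1) * (1 - u n))) Filter.atTop
        (nhds ((k : ℝ) * (L * (1 - L)))) :=
      (((Filter.tendsto_add_atTop_iff_nat 1).2 hlim).mul (hlim.const_sub 1)).const_mul _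
    simp only [fun n => hrec n (hinv n).1 (hinv n).2] at h1
    exact tendsto_nhds_unique h1 tendsto_const_nhds
  have hprod : (g - L) * (1 - g - L) = 0 := by
    have := mul_left_cancel₀ hkpos.ne' (hroot.trans hLroot.symm)
    linarith
  have hLeq : L = g := by
    rcases mul_eq_zero.1 hprod with h | h
    · linarith
    -- The other root `1 - g` is at least `1/2 ≥ g`, so `L ≤ g` forces all three to agree.
    · linarith
  rwa [hLeq] at hlim
end

section
/- Let k ≥ 4 be an integer, f_k(x) = 1/(k(1 + 2⌊x⌋ − x)), and define (u_n) by u₀ = 0 and u_n = f_k(u_{n−1}) for n ≥ 1. Then the sequence (u_n) does not enumerate the nonnegative rationals; more precisely, for every nonempty open interval (α, β) with 0 ≤ α < β, there exists a rational number q ∈ (α, β) that is not equal to u_n for any n ∈ ℕ. -/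
/-!
The orbit stays in `[0, 1/2]`, where the floor vanishes and the recursion is
`u (n + 1) = 1 / (k (1 - u n))`. This map is strictly increasing there and `u 0 = 0 < 1 / k = u 1`,
so the orbit is strictly increasing, and each gap `(u n, u (n + 1))` is free of orbit points.
An interval containing some `u n` also contains an initial part of the gap following `u n`, hence
a rational outside the orbit; an interval containing no `u n` is trivial.
-/

theorem fk_orbit_misses_rationals (k : ℕ) (hk : 4 ≤ k) (u : ℕ → ℝ)
    (hu0 : u 0 = 0)
    (hu : ∀ n : ℕ, 1 ≤ n →
      u n = 1 / ((k : ℝ) * (1 + 2 * (⌊u (n - 1)⌋ : ℝ) - u (n - 1)))) :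
    ∀ α β : ℝ, 0 ≤ α → α < β →
      ∃ q : ℚ, α < (q : ℝ) ∧ (q : ℝ) < β ∧ ∀ n : ℕ, u n ≠ (q : ℝ) := by
  have hk' : (4 : ℝ) ≤ k := by exact_mod_cast hk
  have step : ∀ n, 0 ≤ u n → u n ≤ 1 / 2 → u (n + 1) = 1 / ((k : ℝ) * (1 - u n)) := by
    intro n h0 h1
    have hfl : ⌊u n⌋ = 0 := Int.floor_eq_zero_iff.2 ⟨h0, by linarith⟩
    have h := hu (n + 1) (by omega)
    rw [Nat.add_sub_cancel, hfl] at h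
    simpa using h
  have bounds : ∀ n, 0 ≤ u n ∧ u n ≤ 1 / 2 := by
    intro n
    induction n with
    | zero => rw [hu0]; norm_num
    | succ n ih =>
      obtain ⟨h0, h1⟩ := ih
      have hden : (2 : ℝ) ≤ k * (1 - u n) := by nlinarith
      rw [step n h0 h1]
      exact ⟨by positivity, one_div_le_one_div_of_le two_pos hden⟩
  have lt_succ : ∀ n, u n < u (n + 1) := by
    intro n
    induction n with
    | zero =>
      rw [step 0 (bounds 0).1 (bounds 0).2, hu0]
      simp only [sub_zero, mul_one]
      positivity
    | succ n ih =>
      rw [step n (bounds n).1 (bounds n).2, step (n + 1) (bounds (n + 1)).1 (bounds (n + 1)).2]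
      have h1 := (bounds (n + 1)).2
      apply one_div_lt_one_div_of_lt
      · nlinarith
      · exact mul_lt_mul_of_pos_left (by linarith) (by linarith)
  have mono : StrictMono u := strictMono_nat_of_lt_succ lt_succ
  intro α β _ hαβ
  by_cases hex : ∃ n, α < u n ∧ u n < β
  · obtain ⟨n, hn1, hn2⟩ := hex
    obtain ⟨q, hq1, hq2⟩ := exists_rat_btwn (lt_min hn2 (lt_succ n))
    obtain ⟨hqβ, hqs⟩ := lt_min_iff.1 hq2
    refine ⟨q, hn1.trans hq1, hqβ, fun m hm => ?_⟩
    rw [← hm] at hq1 hqs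
    have h1 := mono.lt_iff_lt.1 hq1
    have h2 := mono.lt_iff_lt.1 hqs
    omega
  · obtain ⟨q, hq1, hq2⟩ := exists_rat_btwn hαβ
    exact ⟨q, hq1, hq2, fun m hm => hex ⟨m, by rwa [hm], by rwa [hm]⟩⟩
end
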